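/- arXiv:1506.04036 — 7 statements merged into one kernel-verified Lean document; each statement's English description precedes it below -/
import Mathlib

section
/- For every F_{q^m}-linear subspace D ⊆ F_{q^m}^n, the following three quantities coincide: dim_{F_q} G(D), dim_{F_q} Tr(D), and dim_{F_{q^m}} D*. Here, having fixed a basis α_1, ..., α_m of F_{q^m} over F_q and writing each d ∈ D uniquely as d = Σ_{i=1}^m α_i d_i with d_i ∈ F_q^n, G(D) ⊆ F_q^n is the F_q-span of all the coordinate vectors d_i of all d ∈ D; Tr(D) = { Tr(d) : d ∈ D } ⊆ F_q^n, where Tr applies the field trace of F_{q^m}/F_q coordinatewise. -/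
open Submodule Module

namespace RankPaper

variable {n : ℕ}

/-- The coordinatewise `q^i`-th power map on `Fqm^n`. -/
def qpowMap (q i : ℕ) {Fqm : Type} [Field Fqm] (v : Fin n → Fqm) : Fin n → Fqm :=
  fun j => v j ^ q ^ i

/-- The Galois closure `D* = Σ_{i=0}^{m-1} D^{q^i}` of a subspace (as the span of the
union of the images of `D` under the coordinatewise `q^i`-power maps, `0 ≤ i < m`). -/
def galClosure (q m : ℕ) {Fqm : Type} [Field Fqm] (D : Submodule Fqm (Fin n → Fqm)) :
    Submodule Fqm (Fin n → Fqm) :=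
  Submodule.span Fqm (⋃ i ∈ Finset.range m, qpowMap q i '' (D : Set (Fin n → Fqm)))

/-- `D` is Galois closed if `D = D*`. -/
def GaloisClosed (q m : ℕ) {Fqm : Type} [Field Fqm] (D : Submodule Fqm (Fin n → Fqm)) : Prop :=
  galClosure q m D = D

/-- Rank weight of a subspace: `wt_R(D) = dim_{Fqm} D*`. -/
noncomputable def wtR (q m : ℕ) {Fqm : Type} [Field Fqm]
    (D : Submodule Fqm (Fin n → Fqm)) : ℕ :=
  finrank Fqm (galClosure q m D)

/-- Rank weight of a vector: `wt_R(c) = wt_R(span {c})`. -/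
noncomputable def wtRv (q m : ℕ) {Fqm : Type} [Field Fqm] (c : Fin n → Fqm) : ℕ :=
  wtR q m (Submodule.span Fqm ({c} : Set (Fin n → Fqm)))

/-- Hamming weight of a subspace: the number of coordinates where some element is nonzero. -/
noncomputable def wtH {Fqm : Type} [Field Fqm] (D : Submodule Fqm (Fin n → Fqm)) : ℕ :=
  {i : Fin n | ∃ d ∈ D, d i ≠ 0}.ncard

/-- `r`-th generalized rank weight of a linear code. -/
noncomputable def dR (q m : ℕ) {Fqm : Type} [Field Fqm]
    (C : Submodule Fqm (Fin n → Fqm)) (r : ℕ) : ℕ :=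
  sInf { dv | ∃ V : Submodule Fqm (Fin n → Fqm),
    GaloisClosed q m V ∧ r ≤ finrank Fqm ↥(C ⊓ V) ∧ dv = finrank Fqm ↥V }

/-- `r`-th generalized Hamming weight of a linear code. -/
noncomputable def dH {Fqm : Type} [Field Fqm]
    (C : Submodule Fqm (Fin n → Fqm)) (r : ℕ) : ℕ :=
  sInf { w | ∃ D : Submodule Fqm (Fin n → Fqm), D ≤ C ∧ finrank Fqm ↥D = r ∧ w = wtH D }

/-- `r`-th relative generalized rank weight of a nested code pair. -/
noncomputable def MR (q m : ℕ) {Fqm : Type} [Field Fqm]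
    (C₁ C₂ : Submodule Fqm (Fin n → Fqm)) (r : ℕ) : ℕ :=
  sInf { dv | ∃ V : Submodule Fqm (Fin n → Fqm), GaloisClosed q m V ∧
    r ≤ finrank Fqm ↥(C₁ ⊓ V) - finrank Fqm ↥(C₂ ⊓ V) ∧ dv = finrank Fqm ↥V }

/-- Minimum rank distance of an arbitrary (possibly nonlinear) code. -/
noncomputable def dRset (q m : ℕ) {Fqm : Type} [Field Fqm] (C : Set (Fin n → Fqm)) : ℕ :=
  sInf { w | ∃ c₁ ∈ C, ∃ c₂ ∈ C, c₁ ≠ c₂ ∧ w = wtRv q m (c₁ - c₂) }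

/-- The linear functional `x ↦ Σ_j x_j y_j` (dot product with `y`). -/
def dotLin {K : Type} [Field K] (y : Fin n → K) : (Fin n → K) →ₗ[K] K :=
  ∑ j, y j • LinearMap.proj j

/-- Orthogonal complement of a subspace with respect to the standard bilinear form. -/
def perp {K : Type} [Field K] (L : Submodule K (Fin n → K)) : Submodule K (Fin n → K) :=
  ⨅ y ∈ L, LinearMap.ker (dotLin y)

/-- The coordinatewise inclusion `Fq^n → Fqm^n`. -/
def embFq (Fq Fqm : Type) [Field Fq] [Field Fqm] [Algebra Fq Fqm] :
    (Fin n → Fq) →ₗ[Fq] (Fin n → Fqm) :=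
  LinearMap.pi fun j => (Algebra.linearMap Fq Fqm).comp (LinearMap.proj j)

/-- `V_L = L ⊗ Fqm`, the `Fqm`-span of `L ⊆ Fq^n` inside `Fqm^n`. -/
def VL {Fq : Type} (Fqm : Type) [Field Fq] [Field Fqm] [Algebra Fq Fqm]
    (L : Submodule Fq (Fin n → Fq)) : Submodule Fqm (Fin n → Fqm) :=
  Submodule.span Fqm (embFq Fq Fqm '' (L : Set (Fin n → Fq)))

/-- Rank-punctured code `C^L`: the image of `C` in `Fqm^n / V_{L^⊥}`. -/
noncomputable def punct {Fq Fqm : Type} [Field Fq] [Field Fqm] [Algebra Fq Fqm]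
    (L : Submodule Fq (Fin n → Fq)) (C : Submodule Fqm (Fin n → Fqm)) :
    Submodule Fqm ((Fin n → Fqm) ⧸ VL Fqm (perp L)) :=
  Submodule.map (VL Fqm (perp L)).mkQ C


/-- `G(D)`: the `Fq`-span of the coordinate vectors (w.r.t. the basis `α` of `Fqm` over `Fq`)
of all the elements of `D`. -/
def GD {m : ℕ} {Fq Fqm : Type} [Field Fq] [Field Fqm] [Algebra Fq Fqm]
    (α : Basis (Fin m) Fq Fqm) (D : Submodule Fqm (Fin n → Fqm)) :
    Submodule Fq (Fin n → Fq) :=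
  Submodule.span Fq { v | ∃ d ∈ D, ∃ i : Fin m, v = fun j => α.repr (d j) i }

/-- The coordinatewise field trace `Fqm^n → Fq^n`. -/
noncomputable def trMap (Fq Fqm : Type) [Field Fq] [Field Fqm] [Algebra Fq Fqm] :
    (Fin n → Fqm) →ₗ[Fq] (Fin n → Fq) :=
  LinearMap.pi fun j => (Algebra.trace Fq Fqm).comp (LinearMap.proj j)

theorem finrank_VL {Fq Fqm : Type} [Field Fq] [Field Fqm] [Algebra Fq Fqm]
    (L : Submodule Fq (Fin n → Fq)) : finrank Fqm (VL Fqm L) = finrank Fq L := by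
  let b := Module.finBasis Fq L
  have hli : LinearIndependent Fq (fun i => (b i : Fin n → Fq)) :=
    b.linearIndependent.map' L.subtype (Submodule.ker_subtype L)
  have hli2 : LinearIndependent Fqm (fun i => algebraMap Fq Fqm ∘ (b i : Fin n → Fq)) :=
    linearIndependent_algebraMap_comp_iff.mpr hli
  have hspan : VL Fqm L =
      Submodule.span Fqm (Set.range (fun i => algebraMap Fq Fqm ∘ (b i : Fin n → Fq))) := by
    apply le_antisymm
    · refine Submodule.span_le.mpr ?_
      rintro _ ⟨v, hv, rfl⟩
      have h1 := congrArg (fun x : L => embFq Fq Fqm (x : Fin n → Fq)) (b.sum_repr ⟨v, hv⟩)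
      simp only [Submodule.coe_sum, Submodule.coe_smul, map_sum, map_smul] at h1
      rw [← h1]
      refine Submodule.sum_mem _ fun i _ => ?_
      rw [← algebraMap_smul Fqm]
      exact Submodule.smul_mem _ _ (Submodule.subset_span ⟨i, rfl⟩)
    · refine Submodule.span_le.mpr ?_
      rintro _ ⟨i, rfl⟩
      exact Submodule.subset_span ⟨b i, (b i).2, rfl⟩
  rw [hspan, finrank_span_eq_card hli2, Fintype.card_fin]

theorem GD_eq_tr {m : ℕ} {Fq Fqm : Type} [Field Fq] [Field Fqm] [Algebra Fq Fqm]
    [FiniteDimensional Fq Fqm] [Algebra.IsSeparable Fq Fqm]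
    (α : Basis (Fin m) Fq Fqm) (D : Submodule Fqm (Fin n → Fqm)) :
    GD α D = (D.restrictScalars Fq).map (trMap Fq Fqm) := by
  apply le_antisymm
  · refine Submodule.span_le.mpr ?_
    rintro _ ⟨d, hd, i, rfl⟩
    refine ⟨α.traceDual i • d, D.smul_mem _ hd, ?_⟩
    funext j
    have h := α.traceDual.traceDual_repr_apply (d j) i
    rw [Module.Basis.traceDual_traceDual] at h
    rw [h]
    simp [trMap, Algebra.traceForm_apply, mul_comm]
  · rintro _ ⟨d, hd, rfl⟩
    have : trMap Fq Fqm d = ∑ i, Algebra.trace Fq Fqm (α i) • (fun j => α.repr (d j) i) := by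
      funext j
      have h1 := congrArg (Algebra.trace Fq Fqm) (α.sum_repr (d j))
      simp only [map_sum, map_smul] at h1
      simp [trMap, ← h1, mul_comm]
    rw [this]
    exact Submodule.sum_mem _ fun i _ =>
      Submodule.smul_mem _ _ (Submodule.subset_span ⟨d, hd, i, rfl⟩)

/-- for every `Fqm`-linear subspace `D ⊆ Fqm^n`,
`dim_{Fq} G(D) = dim_{Fq} Tr(D) = dim_{Fqm} D*`. -/
theorem stmt0 (q m n : ℕ) (Fq Fqm : Type) [Field Fq] [Field Fqm] [Algebra Fq Fqm]
    [Finite Fqm] (hq : Nat.card Fq = q) (hqpp : IsPrimePow q)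
    (α : Basis (Fin m) Fq Fqm) (D : Submodule Fqm (Fin n → Fqm)) :
    finrank Fq (GD α D) = finrank Fq ((D.restrictScalars Fq).map (trMap Fq Fqm)) ∧
    finrank Fq ((D.restrictScalars Fq).map (trMap Fq Fqm)) = finrank Fqm (galClosure q m D) := by
  have : Finite Fq := Finite.of_injective _ (algebraMap Fq Fqm).injective
  have : FiniteDimensional Fq Fqm := Module.Finite.of_basis α
  have hG := GD_eq_tr α D
  refine ⟨by rw [hG], ?_⟩
  rw [← finrank_VL (Fqm := Fqm)]
  suffices h : VL Fqm ((D.restrictScalars Fq).map (trMap Fq Fqm)) = galClosure q m D by rw [h]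
  have hm : finrank Fq Fqm = m := by rw [finrank_eq_card_basis α, Fintype.card_fin]
  apply le_antisymm
  · refine Submodule.span_le.mpr ?_
    rintro _ ⟨_, ⟨d, hd, rfl⟩, rfl⟩
    have h : embFq Fq Fqm (trMap Fq Fqm d) = ∑ i ∈ Finset.range m, qpowMap q i d := by
      funext j
      have h1 := FiniteField.algebraMap_trace_eq_sum_pow Fq Fqm (d j)
      rw [hm, hq] at h1
      simpa [embFq, trMap, qpowMap] using h1
    rw [h]
    refine Submodule.sum_mem _ fun i hi => Submodule.subset_span ?_
    exact Set.mem_biUnion hi ⟨d, hd, rfl⟩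
  · rw [← hG]
    refine Submodule.span_le.mpr ?_
    intro x hx
    simp only [Set.mem_iUnion] at hx
    obtain ⟨i, -, d, hd, rfl⟩ := hx
    have h : qpowMap q i d =
        ∑ k, (α k) ^ q ^ i • embFq Fq Fqm (fun j => α.repr (d j) k) := by
      have := Fintype.ofFinite Fq
      have hq' : Fintype.card Fq = q := by rw [← hq, Nat.card_eq_fintype_card]
      subst hq'
      let φ : Fqm →ₐ[Fq] Fqm := FiniteField.frobeniusAlgHom Fq Fqm ^ i
      have hφ : ∀ x, φ x = x ^ (Fintype.card Fq) ^ i := fun x => by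
        simp [φ, AlgHom.coe_pow, FiniteField.coe_frobeniusAlgHom, pow_iterate]
      funext j
      have h1 := congrArg φ (α.sum_repr (d j))
      rw [map_sum] at h1
      simp only [map_smul] at h1
      simp only [hφ] at h1
      simp only [qpowMap, ← h1]
      simp [embFq, Algebra.smul_def, mul_comm]
    rw [h]
    refine Submodule.sum_mem _ fun k _ => Submodule.smul_mem _ _ (Submodule.subset_span ?_)
    exact ⟨_, Submodule.subset_span ⟨d, hd, k, rfl⟩, rfl⟩

end RankPaper
end

section
/- For every F_{q^m}-linear subspace D ⊆ F_{q^m}^n, wt_R(D) = min{ wt_H(φ_B(D)) : B is a basis of F_{q^m}^n over F_{q^m} consisting of vectors with all coordinates in F_q }. In particular, for every vector c ∈ F_{q^m}^n, wt_R(c) is the minimum Hamming weight of the coordinate vector (x_1, ..., x_n) over all ways of writing c = Σ_{i=1}^n x_i v_i with {v_1, ..., v_n} ⊆ F_q^n a basis of F_{q^m}^n. -/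
open Submodule Module

namespace RankPaper

variable {n : ℕ}

section Helpers

variable {Fq Fqm : Type} [Field Fq] [Field Fqm] [Algebra Fq Fqm] [Finite Fqm]

/-- Vectors with all coordinates in `Fq`. -/
def ratVec (n : ℕ) (Fq Fqm : Type) [Field Fq] [Field Fqm] [Algebra Fq Fqm] :
    Set (Fin n → Fqm) := {v | ∀ j, v j ∈ (algebraMap Fq Fqm).range}

theorem exists_frob (Fq Fqm : Type) [Field Fq] [Field Fqm] [Algebra Fq Fqm] [Finite Fqm] (i : ℕ) :
    ∃ σ : Fqm →ₐ[Fq] Fqm, ∀ x, σ x = x ^ (Nat.card Fq) ^ i := by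
  have : Finite Fq := Finite.of_injective _ (FaithfulSMul.algebraMap_injective Fq Fqm)
  have := Fintype.ofFinite Fq
  refine ⟨FiniteField.frobeniusAlgHom Fq Fqm ^ i, fun x => ?_⟩
  rw [AlgHom.coe_pow, FiniteField.coe_frobeniusAlgHom, pow_iterate, Nat.card_eq_fintype_card]

theorem qpow_mem_span {S : Set (Fin n → Fqm)} (hS : S ⊆ ratVec n Fq Fqm) (i : ℕ)
    {x : Fin n → Fqm} (hx : x ∈ span Fqm S) : qpowMap (Nat.card Fq) i x ∈ span Fqm S := by
  obtain ⟨σ, hσ⟩ := exists_frob Fq Fqm i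
  have hmap : ∀ x : Fin n → Fqm, qpowMap (Nat.card Fq) i x = fun j => σ (x j) := by
    intro x; funext j; simp [qpowMap, hσ]
  simp only [hmap]
  induction hx using Submodule.span_induction with
  | mem x h =>
    have : (fun j => σ (x j)) = x := by
      funext j
      obtain ⟨a, ha⟩ := hS h j
      rw [← ha, AlgHom.commutes]
    rw [this]; exact subset_span h
  | zero => simp only [Pi.zero_apply, map_zero]; exact zero_mem _
  | add x y _ _ hx hy => simp only [Pi.add_apply, map_add]; exact add_mem hx hy
  | smul a x _ hx =>
    simp only [Pi.smul_apply, smul_eq_mul, map_mul]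
    exact smul_mem _ (σ a) hx

theorem galClosure_le {S : Set (Fin n → Fqm)} (hS : S ⊆ ratVec n Fq Fqm) (m : ℕ)
    {D : Submodule Fqm (Fin n → Fqm)} (hD : D ≤ span Fqm S) :
    galClosure (Nat.card Fq) m D ≤ span Fqm S := by
  refine span_le.2 ?_
  simp only [Set.iUnion_subset_iff]
  rintro i - _ ⟨x, hx, rfl⟩
  exact qpow_mem_span hS i (hD hx)

theorem trace_mem_galClosure {D : Submodule Fqm (Fin n → Fqm)} {x : Fin n → Fqm} (hx : x ∈ D) :
    (fun j => algebraMap Fq Fqm (Algebra.trace Fq Fqm (x j))) ∈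
      galClosure (Nat.card Fq) (finrank Fq Fqm) D := by
  have : (fun j => algebraMap Fq Fqm (Algebra.trace Fq Fqm (x j))) =
      ∑ i ∈ Finset.range (finrank Fq Fqm), qpowMap (Nat.card Fq) i x := by
    funext j
    simp [FiniteField.algebraMap_trace_eq_sum_pow, qpowMap, Finset.sum_apply]
  rw [this]
  refine sum_mem fun i hi => subset_span ?_
  simp only [Set.mem_iUnion]
  exact ⟨i, hi, x, hx, rfl⟩

theorem le_span_rat (D : Submodule Fqm (Fin n → Fqm)) :
    D ≤ span Fqm (ratVec n Fq Fqm ∩ galClosure (Nat.card Fq) (finrank Fq Fqm) D) := by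
  intro x hx
  have : Finite Fq := Finite.of_injective _ (FaithfulSMul.algebraMap_injective Fq Fqm)
  have : FiniteDimensional Fq Fqm := Module.Finite.of_finite
  let b := Module.finBasis Fq Fqm
  have key : x = ∑ k, (b.traceDual k) •
      (fun j => algebraMap Fq Fqm (Algebra.trace Fq Fqm ((b k • x) j))) := by
    funext j
    conv_lhs => rw [← b.traceDual.sum_repr (x j)]
    simp only [Finset.sum_apply, Pi.smul_apply, smul_eq_mul, Module.Basis.traceDual_repr_apply,
      Algebra.smul_def, Algebra.traceForm_apply]
    refine Finset.sum_congr rfl fun k _ => ?_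
    rw [mul_comm, mul_comm (x j)]
    rfl

  rw [key]
  refine sum_mem fun k _ => smul_mem _ _ (subset_span ⟨fun j => ⟨_, rfl⟩, ?_⟩)
  exact trace_mem_galClosure (smul_mem _ _ hx)

theorem le_galClosure (D : Submodule Fqm (Fin n → Fqm)) :
    D ≤ galClosure (Nat.card Fq) (finrank Fq Fqm) D := by
  refine (le_span_rat (Fq := Fq) D).trans (span_le.2 Set.inter_subset_right)

theorem span_rat_eq (D : Submodule Fqm (Fin n → Fqm)) :
    span Fqm (ratVec n Fq Fqm ∩ galClosure (Nat.card Fq) (finrank Fq Fqm) D) =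
      galClosure (Nat.card Fq) (finrank Fq Fqm) D :=
  le_antisymm (span_le.2 Set.inter_subset_right)
    (galClosure_le Set.inter_subset_left _ (le_span_rat D))

theorem wtH_map (D : Submodule Fqm (Fin n → Fqm)) (B : Basis (Fin n) Fqm (Fin n → Fqm)) :
    wtH (D.map B.equivFun.toLinearMap) = {i | ∃ d ∈ D, B.repr d i ≠ 0}.ncard := by
  unfold wtH
  congr 1
  ext i
  constructor
  · rintro ⟨_, ⟨d, hd, rfl⟩, h⟩
    exact ⟨d, hd, h⟩
  · rintro ⟨d, hd, h⟩
    exact ⟨_, ⟨d, hd, rfl⟩, h⟩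

theorem lower (D : Submodule Fqm (Fin n → Fqm)) (B : Basis (Fin n) Fqm (Fin n → Fqm))
    (hB : ∀ i, B i ∈ ratVec n Fq Fqm) (m : ℕ) :
    wtR (Nat.card Fq) m D ≤ wtH (D.map B.equivFun.toLinearMap) := by
  rw [wtH_map]
  set I := {i | ∃ d ∈ D, B.repr d i ≠ 0} with hI
  have h1 : D ≤ span Fqm (B '' I) := by
    intro d hd
    rw [B.mem_span_image]
    intro i hi
    exact ⟨d, hd, by simpa using hi⟩
  have h2 := galClosure_le (Fq := Fq) (S := B '' I) (by rintro _ ⟨i, -, rfl⟩; exact hB i) m h1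
  refine (Submodule.finrank_mono h2).trans ?_
  have : Fintype (B '' I) := Fintype.ofFinite _
  have h3 := finrank_span_le_card (R := Fqm) (B '' I)
  rw [← Set.ncard_eq_toFinset_card'] at h3
  exact h3.trans (Set.ncard_image_le (Set.toFinite _))

theorem upper (D : Submodule Fqm (Fin n → Fqm)) :
    ∃ B : Basis (Fin n) Fqm (Fin n → Fqm), (∀ i, B i ∈ ratVec n Fq Fqm) ∧
      wtH (D.map B.equivFun.toLinearMap) ≤ wtR (Nat.card Fq) (finrank Fq Fqm) D := by
  obtain ⟨b, hb, hbs, hbl⟩ := exists_linearIndependent Fqm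
    (ratVec n Fq Fqm ∩ galClosure (Nat.card Fq) (finrank Fq Fqm) D)
  rw [span_rat_eq] at hbs
  obtain ⟨c, hc, hbc, hcs, hcl⟩ := exists_linearIndepOn_id_extension (K := Fqm) (s := b)
    (t := ratVec n Fq Fqm) hbl (hb.trans Set.inter_subset_left)
  have htop : ⊤ ≤ span Fqm c := by
    rw [← (Pi.basisFun Fqm (Fin n)).span_eq]
    refine span_le.2 ?_
    rintro _ ⟨i, rfl⟩
    refine hcs fun j => ?_
    rw [Pi.basisFun_apply]
    by_cases h : j = i
    · subst h; simp only [Pi.single_eq_same]; exact one_mem _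
    · rw [Pi.single_eq_of_ne h]; exact zero_mem _
  let B0 : Basis c Fqm (Fin n → Fqm) := Basis.mk (v := ((↑) : c → Fin n → Fqm)) hcl
    (by simpa using htop)
  have : Fintype c := Fintype.ofFinite c
  have hcard : Fintype.card c = n := by
    rw [← Module.finrank_eq_card_basis B0]; simp
  let e := Fintype.equivFinOfCardEq hcard
  let B := B0.reindex e
  have hBe : ∀ i, B i = (e.symm i : Fin n → Fqm) := by
    intro i
    rw [Basis.reindex_apply]
    exact Basis.mk_apply _ _ _
  refine ⟨B, fun i => ?_, ?_⟩
  · rw [hBe]; exact hc (e.symm i).2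
  · rw [wtH_map]
    have hr : wtR (Nat.card Fq) (finrank Fq Fqm) D = b.ncard := by
      have : Fintype b := Fintype.ofFinite b
      unfold wtR
      rw [← hbs, finrank_span_set_eq_card hbl, Set.ncard_eq_toFinset_card']
    rw [hr]
    have hbB : B '' {i | B i ∈ b} = b := by
      ext v
      constructor
      · rintro ⟨i, hi, rfl⟩; exact hi
      · intro hv
        refine ⟨e ⟨v, hbc hv⟩, ?_, ?_⟩ <;> simp [hBe, hv]
    refine Set.ncard_le_ncard_of_injOn B ?_ B.injective.injOn (Set.toFinite _)
    rintro i ⟨d, hd, hdi⟩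
    have h1 : d ∈ span Fqm (B '' {i | B i ∈ b}) := by
      rw [hbB, hbs]; exact le_galClosure D hd
    rw [B.mem_span_image] at h1
    exact h1 (by simpa using hdi)

theorem main_eq (q m : ℕ) (hq : Nat.card Fq = q) (hm : finrank Fq Fqm = m)
    (D : Submodule Fqm (Fin n → Fqm)) :
    wtR q m D = sInf { w | ∃ B : Basis (Fin n) Fqm (Fin n → Fqm),
        (∀ i j, B i j ∈ (algebraMap Fq Fqm).range) ∧
        w = wtH (D.map B.equivFun.toLinearMap) } := by
  subst hq hm
  obtain ⟨B, hB, hle⟩ := upper (Fq := Fq) D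
  refine le_antisymm (le_csInf ⟨_, B, hB, rfl⟩ ?_) (le_trans (Nat.sInf_le ?_) hle)
  swap
  · exact ⟨B, hB, rfl⟩
  rintro _ ⟨B', hB', rfl⟩
  exact lower D B' hB' _

end Helpers

/-- `wt_R(D)` equals the minimum of `wt_H(φ_B(D))` over all bases `B` of
`Fqm^n` (over `Fqm`) whose vectors have all their coordinates in `Fq`; in particular,
`wt_R(c)` is the minimum Hamming weight of the coordinate vector of `c` over all such
bases. -/
theorem stmt1 (q m n : ℕ) (Fq Fqm : Type) [Field Fq] [Field Fqm] [Algebra Fq Fqm]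
    [Finite Fqm] (hq : Nat.card Fq = q) (hm : finrank Fq Fqm = m)
    (D : Submodule Fqm (Fin n → Fqm)) :
    wtR q m D = sInf { w | ∃ B : Basis (Fin n) Fqm (Fin n → Fqm),
        (∀ i j, B i j ∈ (algebraMap Fq Fqm).range) ∧
        w = wtH (D.map B.equivFun.toLinearMap) } ∧
    ∀ c : Fin n → Fqm,
      wtRv q m c = sInf { w | ∃ B : Basis (Fin n) Fqm (Fin n → Fqm),
        (∀ i j, B i j ∈ (algebraMap Fq Fqm).range) ∧
        w = {j : Fin n | B.equivFun c j ≠ 0}.ncard } := by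
  refine ⟨main_eq q m hq hm D, fun c => ?_⟩
  rw [wtRv, main_eq q m hq hm]
  congr 1
  ext w
  refine exists_congr fun B => and_congr_right fun _ => ?_
  have : wtH ((span Fqm {c}).map B.equivFun.toLinearMap) =
      {j : Fin n | B.equivFun c j ≠ 0}.ncard := by
    rw [wtH_map]
    congr 1
    ext i
    simp only [mem_span_singleton, Set.mem_ofPred_eq, Basis.equivFun_apply]
    constructor
    · rintro ⟨_, ⟨a, rfl⟩, h⟩ h0
      exact h (by simp [h0])
    · intro h
      exact ⟨c, ⟨1, one_smul _ _⟩, h⟩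
  rw [this]

end RankPaper
end

section
/- For every F_{q^m}-linear code C ⊆ F_{q^m}^n of dimension k and every 1 ≤ r ≤ k, the r-th generalized rank weight satisfies d_{R,r}(C) = min{ d_{H,r}(φ_B(C)) : B is a basis of F_{q^m}^n over F_{q^m} consisting of vectors with all coordinates in F_q }. -/
open Submodule Module

namespace RankPaper

variable {n : ℕ}

lemma qpow_add {Fq Fqm : Type} [Field Fq] [Field Fqm] [Algebra Fq Fqm] [Finite Fqm] (i : ℕ)
    (x y : Fqm) : (x + y) ^ Nat.card Fq ^ i = x ^ Nat.card Fq ^ i + y ^ Nat.card Fq ^ i := by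
  have := Finite.of_injective _ (FaithfulSMul.algebraMap_injective Fq Fqm)
  have := Fintype.ofFinite Fq
  have h : ∀ z : Fqm, z ^ Nat.card Fq ^ i = (FiniteField.frobeniusAlgHom Fq Fqm ^ i) z := by
    intro z
    rw [AlgHom.coe_pow, FiniteField.coe_frobeniusAlgHom, pow_iterate, Nat.card_eq_fintype_card]
  simp only [h, map_add]

lemma qpow_range {Fq Fqm : Type} [Field Fq] [Field Fqm] [Algebra Fq Fqm] [Finite Fqm] (i : ℕ)
    (x : Fqm) (hx : x ∈ (algebraMap Fq Fqm).range) : x ^ Nat.card Fq ^ i = x := by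
  have := Finite.of_injective _ (FaithfulSMul.algebraMap_injective Fq Fqm)
  have := Fintype.ofFinite Fq
  obtain ⟨a, rfl⟩ := hx
  rw [← map_pow, Nat.card_eq_fintype_card, FiniteField.pow_card_pow]

lemma galoisClosed_span (Fq Fqm : Type) [Field Fq] [Field Fqm] [Algebra Fq Fqm] [Finite Fqm]
    {m : ℕ} (hm : 0 < m) (S : Set (Fin n → Fqm))
    (hS : ∀ v ∈ S, ∀ j, v j ∈ (algebraMap Fq Fqm).range) :
    GaloisClosed (Nat.card Fq) m (Submodule.span Fqm S) := by
  have := Finite.of_injective _ (FaithfulSMul.algebraMap_injective Fq Fqm)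
  unfold GaloisClosed galClosure
  apply le_antisymm
  · rw [Submodule.span_le]
    intro w hw
    simp only [Set.mem_iUnion, Set.mem_image] at hw
    obtain ⟨i, -, v, hv, rfl⟩ := hw
    change v ∈ Submodule.span Fqm S at hv
    change qpowMap _ i v ∈ Submodule.span Fqm S
    induction hv using Submodule.span_induction with
    | mem x hx =>
      have : qpowMap (Nat.card Fq) i x = x := by
        funext j; exact qpow_range i _ (hS x hx j)
      rw [this]; exact Submodule.subset_span hx
    | zero =>
      have : qpowMap (Nat.card Fq) i (0 : Fin n → Fqm) = 0 := by
        funext j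
        simp [qpowMap, Nat.card_pos.ne']
      rw [this]; exact Submodule.zero_mem _
    | add x y _ _ hx hy =>
      have : qpowMap (Nat.card Fq) i (x + y)
          = qpowMap (Nat.card Fq) i x + qpowMap (Nat.card Fq) i y := by
        funext j; exact qpow_add i _ _
      rw [this]; exact Submodule.add_mem _ hx hy
    | smul a x _ hx =>
      have : qpowMap (Nat.card Fq) i (a • x)
          = (a ^ Nat.card Fq ^ i) • qpowMap (Nat.card Fq) i x := by
        funext j; simp [qpowMap, mul_pow]
      rw [this]; exact Submodule.smul_mem _ _ hx
  · intro v hv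
    apply Submodule.subset_span
    simp only [Set.mem_iUnion, Set.mem_image]
    refine ⟨0, by simpa using hm, v, hv, ?_⟩
    funext j; simp [qpowMap]

lemma descent (Fq Fqm : Type) [Field Fq] [Field Fqm] [Algebra Fq Fqm] [Finite Fqm]
    (V : Submodule Fqm (Fin n → Fqm)) (hV : GaloisClosed (Nat.card Fq) (finrank Fq Fqm) V) :
    V ≤ Submodule.span Fqm {v | v ∈ V ∧ ∀ j, v j ∈ (algebraMap Fq Fqm).range} := by
  have := Finite.of_injective _ (FaithfulSMul.algebraMap_injective Fq Fqm)
  have : Module.Finite Fq Fqm := inferInstance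
  intro v hv
  let b := Module.finBasis Fq Fqm
  let T : (Fin n → Fqm) → (Fin n → Fqm) := fun w j => algebraMap Fq Fqm (Algebra.trace Fq Fqm (w j))
  have hT : ∀ w ∈ V, T w ∈ V := by
    intro w hw
    have : T w = ∑ i ∈ Finset.range (finrank Fq Fqm), qpowMap (Nat.card Fq) i w := by
      funext j
      simp only [T, Finset.sum_apply, qpowMap]
      exact FiniteField.algebraMap_trace_eq_sum_pow Fq Fqm (w j)
    rw [this]
    refine Submodule.sum_mem _ fun i hi => ?_
    rw [← (show galClosure _ _ V = V from hV)]
    apply Submodule.subset_span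
    simp only [Set.mem_iUnion, Set.mem_image]
    exact ⟨i, hi, w, hw, rfl⟩
  have hv' : v = ∑ i, b.traceDual i • T (b i • v) := by
    funext j
    conv_lhs => rw [← b.traceDual.sum_repr (v j)]
    simp only [Finset.sum_apply, Pi.smul_apply, T, Module.Basis.traceDual_repr_apply,
      Algebra.traceForm_apply, smul_eq_mul, Algebra.smul_def]
    refine Finset.sum_congr rfl fun i _ => ?_
    rw [mul_comm, mul_comm (v j)]
    rfl
  rw [hv']
  refine Submodule.sum_mem _ fun i _ => Submodule.smul_mem _ _ (Submodule.subset_span ?_)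
  exact ⟨hT _ (V.smul_mem _ hv), fun j => ⟨_, rfl⟩⟩

lemma exists_basis (Fq Fqm : Type) [Field Fq] [Field Fqm] [Algebra Fq Fqm] [Finite Fqm]
    (V : Submodule Fqm (Fin n → Fqm)) (hV : GaloisClosed (Nat.card Fq) (finrank Fq Fqm) V) :
    ∃ (B : Basis (Fin n) Fqm (Fin n → Fqm)) (I : Set (Fin n)),
      (∀ i j, B i j ∈ (algebraMap Fq Fqm).range) ∧ I.ncard = finrank Fqm V ∧
      V ≤ Submodule.span Fqm (B '' I) := by
  obtain ⟨s, hsS, -, hs, hsi⟩ := exists_linearIndepOn_id_extension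
    (linearIndepOn_empty Fqm (id : (Fin n → Fqm) → _))
    (Set.empty_subset {v | v ∈ V ∧ ∀ j, v j ∈ (algebraMap Fq Fqm).range})
  have hVs : V = Submodule.span Fqm s := by
    apply le_antisymm
    · exact (descent Fq Fqm V hV).trans (Submodule.span_le.2 hs)
    · rw [Submodule.span_le]; exact fun x hx => (hsS hx).1
  obtain ⟨t, htS, hst, ht, hti⟩ := exists_linearIndepOn_id_extension hsi
    (show s ⊆ {v | ∀ j, v j ∈ (algebraMap Fq Fqm).range} from fun x hx => (hsS hx).2)
  have htop : ⊤ ≤ Submodule.span Fqm t := by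
    rw [← (Pi.basisFun Fqm (Fin n)).span_eq, Submodule.span_le]
    rintro _ ⟨i, rfl⟩
    apply ht
    intro j
    rw [Pi.basisFun_apply, Pi.single_apply]
    split_ifs
    · exact one_mem _
    · exact zero_mem _
  let B₀ : Basis t Fqm (Fin n → Fqm) := Basis.mk (v := ((↑) : t → Fin n → Fqm)) hti (by simpa using htop)
  let e : t ≃ Fin n := B₀.indexEquiv (Pi.basisFun Fqm (Fin n))
  have hB : ∀ i, (B₀.reindex e) i = (e.symm i : Fin n → Fqm) := by
    intro i; rw [Basis.reindex_apply]; exact Basis.mk_apply _ _ _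
  have himg : (B₀.reindex e) '' {i | (e.symm i : Fin n → Fqm) ∈ s} = s := by
    ext x
    constructor
    · rintro ⟨i, hi, rfl⟩
      rw [hB]; exact hi
    · intro hx
      refine ⟨e ⟨x, hst hx⟩, ?_, ?_⟩
      · simpa using hx
      · rw [hB]; simp
  refine ⟨B₀.reindex e, {i | (e.symm i : Fin n → Fqm) ∈ s}, ?_, ?_, ?_⟩
  · intro i j
    rw [hB]; exact htS (e.symm i).2 j
  · rw [← Set.ncard_image_of_injective _ (B₀.reindex e).injective, himg, hVs]
    have : Fintype s := Fintype.ofFinite s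
    rw [finrank_span_set_eq_card hsi, Set.ncard_eq_toFinset_card']
  · rw [himg]; exact hVs.le

lemma dH_attained {K : Type} [Field K] (C : Submodule K (Fin n → K)) (r : ℕ)
    (hr : r ≤ finrank K C) : ∃ D ≤ C, finrank K D = r := by
  obtain ⟨f, hf⟩ := exists_linearIndependent_of_le_finrank hr
  have hf' : LinearIndependent K (fun i => (f i : Fin n → K)) :=
    hf.map' C.subtype (Submodule.ker_subtype C)
  refine ⟨Submodule.span K (Set.range fun i => (f i : Fin n → K)), ?_, ?_⟩
  · rw [Submodule.span_le]; rintro _ ⟨i, rfl⟩; exact (f i).2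
  · rw [finrank_span_eq_card hf']; simp

/-- for a linear code `C ⊆ Fqm^n` of dimension `k` and `1 ≤ r ≤ k`,
`d_{R,r}(C)` equals the minimum of `d_{H,r}(φ_B(C))` over all bases `B` of `Fqm^n`
whose vectors have all their coordinates in `Fq`. -/
theorem stmt2 (q m n k r : ℕ) (Fq Fqm : Type) [Field Fq] [Field Fqm] [Algebra Fq Fqm]
    [Finite Fqm] (hq : Nat.card Fq = q) (hm : finrank Fq Fqm = m)
    (C : Submodule Fqm (Fin n → Fqm)) (hk : finrank Fqm C = k)
    (hr1 : 1 ≤ r) (hrk : r ≤ k) :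
    dR q m C r = sInf { w | ∃ B : Basis (Fin n) Fqm (Fin n → Fqm),
        (∀ i j, B i j ∈ (algebraMap Fq Fqm).range) ∧
        w = dH (C.map B.equivFun.toLinearMap) r } := by
  subst hq hm
  have hfin := Finite.of_injective _ (FaithfulSMul.algebraMap_injective Fq Fqm)
  have hmfin : Module.Finite Fq Fqm := inferInstance
  have hmpos : 0 < finrank Fq Fqm := Module.finrank_pos
  have hclosedTop : GaloisClosed (Nat.card Fq) (finrank Fq Fqm) (⊤ : Submodule Fqm (Fin n → Fqm)) := by
    have := galoisClosed_span Fq Fqm hmpos (Set.range (Pi.basisFun Fqm (Fin n))) (by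
      rintro _ ⟨i, rfl⟩ j
      rw [Pi.basisFun_apply, Pi.single_apply]
      split_ifs
      · exact one_mem _
      · exact zero_mem _)
    rwa [(Pi.basisFun Fqm (Fin n)).span_eq] at this
  have hne : { dv | ∃ V : Submodule Fqm (Fin n → Fqm),
      GaloisClosed (Nat.card Fq) (finrank Fq Fqm) V ∧ r ≤ finrank Fqm ↥(C ⊓ V) ∧
        dv = finrank Fqm ↥V }.Nonempty :=
    ⟨_, ⊤, hclosedTop, by rw [inf_top_eq, hk]; exact hrk, rfl⟩
  have hne2 : { w | ∃ B : Basis (Fin n) Fqm (Fin n → Fqm),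
        (∀ i j, B i j ∈ (algebraMap Fq Fqm).range) ∧
        w = dH (C.map B.equivFun.toLinearMap) r }.Nonempty := by
    obtain ⟨B, -, hB, -⟩ := exists_basis Fq Fqm _ hclosedTop
    exact ⟨_, B, hB, rfl⟩
  apply le_antisymm
  · apply le_csInf hne2
    rintro _ ⟨B, hB, rfl⟩
    obtain ⟨D, hDC, hDr, hw⟩ : dH (C.map B.equivFun.toLinearMap) r ∈
        { w | ∃ D : Submodule Fqm (Fin n → Fqm), D ≤ C.map B.equivFun.toLinearMap ∧
          finrank Fqm ↥D = r ∧ w = wtH D } := by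
      apply Nat.sInf_mem
      obtain ⟨D, h1, h2⟩ := dH_attained (C.map B.equivFun.toLinearMap) r
        (by rw [LinearEquiv.finrank_map_eq B.equivFun C, hk]; exact hrk)
      exact ⟨_, D, h1, h2, rfl⟩
    rw [hw]
    apply Nat.sInf_le
    refine ⟨Submodule.span Fqm (B '' {i | ∃ d ∈ D, d i ≠ 0}), ?_, ?_, ?_⟩
    · apply galoisClosed_span Fq Fqm hmpos
      rintro _ ⟨i, -, rfl⟩ j
      exact hB i j
    · rw [← hDr, ← LinearEquiv.finrank_map_eq B.equivFun.symm D]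
      apply Submodule.finrank_mono
      rintro _ ⟨d, hd, rfl⟩
      refine ⟨?_, ?_⟩
      · obtain ⟨c, hc, rfl⟩ := hDC hd
        simpa using hc
      · have : B.equivFun.symm d = ∑ i, d i • B i := B.equivFun_symm_apply d
        change B.equivFun.symm d ∈ _
        rw [this]
        refine Submodule.sum_mem _ fun i _ => ?_
        by_cases h : d i = 0
        · rw [h, zero_smul]; exact Submodule.zero_mem _
        · exact Submodule.smul_mem _ _ (Submodule.subset_span ⟨i, ⟨d, hd, h⟩, rfl⟩)
    · have hli : LinearIndepOn Fqm id (B '' {i | ∃ d ∈ D, d i ≠ 0}) :=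
        B.linearIndependent.linearIndepOn_id.mono (Set.image_subset_range _ _)
      have : Fintype ↑(B '' {i | ∃ d ∈ D, d i ≠ 0}) := Fintype.ofFinite _
      rw [finrank_span_set_eq_card hli, ← Set.ncard_eq_toFinset_card',
        Set.ncard_image_of_injective _ B.injective]
      rfl
  · apply le_csInf hne
    rintro _ ⟨V, hV, hrV, rfl⟩
    obtain ⟨B, I, hB, hI, hVI⟩ := exists_basis Fq Fqm V hV
    have hle : sInf { w | ∃ B : Basis (Fin n) Fqm (Fin n → Fqm),
        (∀ i j, B i j ∈ (algebraMap Fq Fqm).range) ∧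
        w = dH (C.map B.equivFun.toLinearMap) r } ≤ dH (C.map B.equivFun.toLinearMap) r :=
      Nat.sInf_le ⟨B, hB, rfl⟩
    refine hle.trans ?_
    obtain ⟨D, hD, hDr⟩ := dH_attained (C ⊓ V) r hrV
    have hle2 : dH (C.map B.equivFun.toLinearMap) r ≤ wtH (D.map B.equivFun.toLinearMap) :=
      Nat.sInf_le ⟨D.map B.equivFun.toLinearMap, Submodule.map_mono (hD.trans inf_le_left),
        (LinearEquiv.finrank_map_eq B.equivFun D).trans hDr, rfl⟩
    refine hle2.trans ?_
    · rw [← hI]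
      apply Set.ncard_le_ncard _ (Set.toFinite I)
      rintro i ⟨_, ⟨d, hd, rfl⟩, hi⟩
      have hdI := hVI (hD hd).2
      rw [B.mem_span_image] at hdI
      apply hdI
      simpa using hi

end RankPaper
end

section
/- For nested F_{q^m}-linear codes C_2 ⊊ C_1 ⊆ F_{q^m}^n and every 1 ≤ r ≤ dim(C_1/C_2), the r-th relative generalized rank weight satisfies M_{R,r}(C_1, C_2) = min{ wt_R(D) : D ⊆ C_1 an F_{q^m}-subspace with D ∩ C_2 = 0 and dim_{F_{q^m}} D = r }. -/
open Submodule Module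

namespace RankPaper

variable {n : ℕ}

theorem aux_sub {K V : Type*} [Field K] [AddCommGroup V] [Module K V] [FiniteDimensional K V]
    (A B : Submodule K V) (hAB : A ≤ B) (r : ℕ) (hr : r ≤ finrank K B - finrank K A) :
    ∃ D : Submodule K V, D ≤ B ∧ D ⊓ A = ⊥ ∧ finrank K D = r := by
  obtain ⟨W, hW⟩ := Submodule.exists_isCompl A
  have h1 : A ⊔ W ⊓ B = B := by
    rw [← sup_inf_assoc_of_le W hAB, hW.sup_eq_top, top_inf_eq]
  have h2 : A ⊓ (W ⊓ B) = ⊥ := by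
    rw [← inf_assoc, hW.inf_eq_bot, bot_inf_eq]
  have h3 := Submodule.finrank_sup_add_finrank_inf_eq A (W ⊓ B)
  rw [h1, h2, finrank_bot] at h3
  obtain ⟨f, hf⟩ := exists_linearIndependent_of_le_finrank (R := K) (M := ↥(W ⊓ B)) (n := r)
    (by omega)
  have hf' : LinearIndependent K (fun i => (f i : V)) :=
    hf.map' (W ⊓ B).subtype (Submodule.ker_subtype _)
  have hle : span K (Set.range (fun i => (f i : V))) ≤ W ⊓ B := by
    rw [span_le]
    rintro _ ⟨i, rfl⟩
    exact (f i).2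
  refine ⟨span K (Set.range (fun i => (f i : V))), hle.trans inf_le_right, ?_, ?_⟩
  · rw [eq_bot_iff, ← h2, inf_comm A]
    exact inf_le_inf_right A hle
  · rw [finrank_span_eq_card hf', Fintype.card_fin]

theorem galClosure_mono (q m : ℕ) {Fqm : Type} [Field Fqm]
    {D E : Submodule Fqm (Fin n → Fqm)} (h : D ≤ E) : galClosure q m D ≤ galClosure q m E := by
  apply Submodule.span_mono
  exact Set.iUnion₂_mono fun i _ => Set.image_mono h

theorem le_galClosure_s4 (q m : ℕ) (hm : 0 < m) {Fqm : Type} [Field Fqm]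
    (D : Submodule Fqm (Fin n → Fqm)) : D ≤ galClosure q m D := by
  intro x hx
  apply Submodule.subset_span
  simp only [Set.mem_iUnion]
  refine ⟨0, Finset.mem_range.2 hm, x, hx, ?_⟩
  funext j
  simp [qpowMap]

theorem galClosure_closed (q m : ℕ) (hm : 0 < m) {Fqm : Type} [Field Fqm]
    (hadd : ∀ (i : ℕ) (x y : Fqm), (x + y) ^ q ^ i = x ^ q ^ i + y ^ q ^ i)
    (hq : q ≠ 0) (hper : ∀ x : Fqm, x ^ q ^ m = x)
    (D : Submodule Fqm (Fin n → Fqm)) : GaloisClosed q m (galClosure q m D) := by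
  refine le_antisymm ?_ (le_galClosure_s4 q m hm _)
  have hmod : ∀ (k : ℕ) (x : Fqm), x ^ q ^ k = x ^ q ^ (k % m) := by
    intro k x
    have hmul : ∀ (t : ℕ) (y : Fqm), y ^ q ^ (m * t) = y := by
      intro t
      induction t with
      | zero => intro y; simp
      | succ t ih => intro y; rw [mul_add, mul_one, pow_add, pow_mul, ih, hper]
    conv_lhs => rw [← Nat.div_add_mod k m, pow_add, pow_mul, hmul]
  refine Submodule.span_le.2 ?_
  intro z hz
  simp only [Set.mem_iUnion] at hz
  obtain ⟨i, -, x, hx, rfl⟩ := hz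
  change x ∈ galClosure q m D at hx
  change qpowMap q i x ∈ galClosure q m D
  unfold galClosure at hx
  induction hx using Submodule.span_induction with
  | mem x hx =>
    simp only [Set.mem_iUnion] at hx
    obtain ⟨j, -, d, hd, rfl⟩ := hx
    apply Submodule.subset_span
    simp only [Set.mem_iUnion]
    refine ⟨(j + i) % m, Finset.mem_range.2 (Nat.mod_lt _ hm), d, hd, ?_⟩
    funext l
    simp only [qpowMap]
    rw [← hmod, pow_add, pow_mul]
  | zero =>
    have : qpowMap q i (0 : Fin n → Fqm) = 0 := by
      funext l
      simp [qpowMap, hq]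
    rw [this]
    exact zero_mem _
  | add x y _ _ hx hy =>
    have : qpowMap q i (x + y) = qpowMap q i x + qpowMap q i y := by
      funext l
      simp [qpowMap, hadd]
    rw [this]
    exact add_mem hx hy
  | smul a x _ hx =>
    have : qpowMap q i (a • x) = a ^ q ^ i • qpowMap q i x := by
      funext l
      simp [qpowMap, mul_pow]
    rw [this]
    exact Submodule.smul_mem _ _ hx

/-- for nested codes `C₂ ⊊ C₁ ⊆ Fqm^n` and `1 ≤ r ≤ dim(C₁/C₂)`,
`M_{R,r}(C₁,C₂) = min { wt_R(D) : D ⊆ C₁, D ∩ C₂ = 0, dim D = r }`. -/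
theorem stmt4 (q m n r : ℕ) (Fq Fqm : Type) [Field Fq] [Field Fqm] [Algebra Fq Fqm]
    [Finite Fqm] (hq : Nat.card Fq = q) (hm : finrank Fq Fqm = m)
    (C₁ C₂ : Submodule Fqm (Fin n → Fqm)) (hC : C₂ < C₁)
    (hr1 : 1 ≤ r) (hrl : r ≤ finrank Fqm C₁ - finrank Fqm C₂) :
    MR q m C₁ C₂ r = sInf { w | ∃ D : Submodule Fqm (Fin n → Fqm),
        D ≤ C₁ ∧ D ⊓ C₂ = ⊥ ∧ finrank Fqm D = r ∧ w = wtR q m D } := by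
  have hfin : Finite Fq := Finite.of_injective _ (algebraMap Fq Fqm).injective
  have : Fintype Fq := Fintype.ofFinite Fq
  have : Module.Finite Fq Fqm := Module.Finite.of_finite
  have hm0 : 0 < m := hm ▸ Module.finrank_pos
  have hq0 : q ≠ 0 := hq ▸ Nat.card_pos.ne'
  have hadd1 : ∀ x y : Fqm, (x + y) ^ q = x ^ q + y ^ q := by
    intro x y
    have := map_add (FiniteField.frobeniusAlgHom Fq Fqm) x y
    rw [Nat.card_eq_fintype_card] at hq
    simpa [FiniteField.coe_frobeniusAlgHom, hq] using this
  have hadd : ∀ (i : ℕ) (x y : Fqm), (x + y) ^ q ^ i = x ^ q ^ i + y ^ q ^ i := by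
    intro i
    induction i with
    | zero => intro x y; simp
    | succ i ih => intro x y; simp only [pow_succ, pow_mul, ih, hadd1]
  have hper : ∀ x : Fqm, x ^ q ^ m = x := by
    intro x
    have : Fintype Fqm := Fintype.ofFinite Fqm
    rw [← hq, ← hm, ← Module.natCard_eq_pow_finrank, Nat.card_eq_fintype_card]
    exact FiniteField.pow_card x
  have key : ∀ D : Submodule Fqm (Fin n → Fqm), D ≤ C₁ → D ⊓ C₂ = ⊥ → finrank Fqm D = r →
      r ≤ finrank Fqm ↥(C₁ ⊓ galClosure q m D) - finrank Fqm ↥(C₂ ⊓ galClosure q m D) := by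
    intro D h1 h2 h3
    have hD := le_galClosure_s4 q m hm0 D
    have h4 := Submodule.finrank_sup_add_finrank_inf_eq D (C₂ ⊓ galClosure q m D)
    rw [← inf_assoc, h2, bot_inf_eq, finrank_bot] at h4
    have h5 : D ⊔ C₂ ⊓ galClosure q m D ≤ C₁ ⊓ galClosure q m D :=
      sup_le (le_inf h1 hD) (inf_le_inf_right _ hC.le)
    have h6 := Submodule.finrank_mono h5
    omega
  obtain ⟨D₀, hD₀⟩ := aux_sub C₂ C₁ hC.le r hrl
  unfold MR
  apply le_antisymm
  · refine le_csInf ⟨_, D₀, hD₀.1, hD₀.2.1, hD₀.2.2, rfl⟩ ?_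
    rintro w ⟨D, h1, h2, h3, rfl⟩
    exact Nat.sInf_le ⟨galClosure q m D, galClosure_closed q m hm0 hadd hq0 hper D,
      key D h1 h2 h3, rfl⟩
  · refine le_csInf ⟨_, galClosure q m D₀, galClosure_closed q m hm0 hadd hq0 hper D₀,
      key D₀ hD₀.1 hD₀.2.1 hD₀.2.2, rfl⟩ ?_
    rintro w ⟨V, hV, h1, rfl⟩
    obtain ⟨D, h2, h3, h4⟩ := aux_sub (C₂ ⊓ V) (C₁ ⊓ V) (inf_le_inf_right _ hC.le) r h1
    have hDV : D ≤ V := h2.trans inf_le_right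
    refine le_trans (b := wtR q m D) (Nat.sInf_le ⟨D, h2.trans inf_le_left, ?_, h4, rfl⟩) ?_
    · rw [← h3, inf_comm C₂ V, ← inf_assoc, inf_eq_left.2 hDV]
    · have h5 := galClosure_mono q m hDV
      rw [show galClosure q m V = V from hV] at h5
      exact Submodule.finrank_mono h5

end RankPaper
end

section
/- Let V ⊆ F_{q^m}^n and V' ⊆ F_{q^m}^{n'} be Galois closed F_{q^m}-linear subspaces and let φ : V → V' be an F_{q^m}-linear vector space isomorphism. The following conditions are equivalent: (1) for every c ∈ V with wt_R(c) = 1, one has wt_R(φ(c)) = 1; (2) wt_R(φ(c)) = wt_R(c) for all c ∈ V; (3) wt_R(φ(D)) = wt_R(D) for every F_{q^m}-linear subspace D ⊆ V; (4) for every Galois closed subspace U ⊆ F_{q^m}^n with U ⊆ V, the image φ(U) is a Galois closed subspace of F_{q^m}^{n'}; (5) there exist β ∈ F_{q^m} \ {0} and a matrix A with entries in F_q of size n × n' such that φ(c) = β c A for every c ∈ V. -/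
open Submodule Module

namespace RankPaper

variable {n : ℕ}

section helpers

set_option linter.unusedSectionVars false

variable (F L : Type) [Field F] [Field L] [Algebra F L] [Finite L]

theorem qpowMap_def {L : Type} [Field L] {k : ℕ} (q i : ℕ) (v : Fin k → L) :
    qpowMap q i v = fun j => v j ^ q ^ i := rfl

theorem aux_finite (F L : Type) [Field F] [Field L] [Algebra F L] [Finite L] : Finite F := Finite.of_injective _ (FaithfulSMul.algebraMap_injective F L)

theorem aux_add_pow (i : ℕ) (x y : L) :
    (x + y) ^ Nat.card F ^ i = x ^ Nat.card F ^ i + y ^ Nat.card F ^ i := by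
  have := aux_finite F L
  have := Fintype.ofFinite F
  induction i with
  | zero => simp
  | succ i ih =>
    rw [pow_succ, pow_mul, ih, pow_mul, pow_mul]
    have h := map_add (FiniteField.frobeniusAlgHom F L) (x ^ Nat.card F ^ i) (y ^ Nat.card F ^ i)
    simpa [FiniteField.coe_frobeniusAlgHom, ← Nat.card_eq_fintype_card] using h

theorem aux_alg_pow (a : F) : (algebraMap F L a) ^ Nat.card F = algebraMap F L a := by
  have := aux_finite F L
  have := Fintype.ofFinite F
  rw [← map_pow, Nat.card_eq_fintype_card, FiniteField.pow_card]

theorem aux_card_pos (F L : Type) [Field F] [Field L] [Algebra F L] [Finite L] : Nat.card F ≠ 0 := by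
  have := aux_finite F L
  exact Nat.card_pos.ne'

theorem aux_fixed (x : L) (hx : x ^ Nat.card F = x) : ∃ a : F, algebraMap F L a = x := by
  have := aux_finite F L
  have := Fintype.ofFinite F
  have h : x ∈ (⊥ : IntermediateField F L) := by
    rw [IsGalois.mem_bot_iff_fixed]
    intro g
    obtain ⟨i, rfl⟩ := (FiniteField.bijective_frobeniusAlgEquivOfAlgebraic_pow F L).2 g
    simp only [AlgEquiv.coe_pow]
    apply Function.iterate_fixed
    rw [FiniteField.coe_frobeniusAlgEquivOfAlgebraic]
    simpa [← Nat.card_eq_fintype_card] using hx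
  exact IntermediateField.mem_bot.1 h

theorem aux_pow_full (x : L) : x ^ Nat.card F ^ finrank F L = x := by
  have := Fintype.ofFinite L
  have := aux_finite F L
  rw [← Module.natCard_eq_pow_finrank, Nat.card_eq_fintype_card, FiniteField.pow_card]

/-- `s`-stability. -/
def Stab {k : ℕ} (U : Submodule L (Fin k → L)) : Prop :=
  ∀ u ∈ U, (fun j => u j ^ Nat.card F) ∈ U

variable {F L}

theorem Stab.iter {k : ℕ} {U : Submodule L (Fin k → L)} (h : Stab F L U) (i : ℕ) :
    ∀ u ∈ U, qpowMap (Nat.card F) i u ∈ U := by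
  induction i with
  | zero => intro u hu; simpa [qpowMap_def] using hu
  | succ i ih =>
    intro u hu
    have := h _ (ih u hu)
    simpa [qpowMap_def, pow_succ, pow_mul] using this

variable (F) in
theorem le_closure {k : ℕ} (D : Submodule L (Fin k → L)) :
    D ≤ galClosure (Nat.card F) (finrank F L) D := by
  intro u hu
  apply Submodule.subset_span
  simp only [Set.mem_iUnion, Finset.mem_range]
  exact ⟨0, finrank_pos, u, hu, by simp [qpowMap_def]⟩

theorem closure_le {k : ℕ} {D U : Submodule L (Fin k → L)} (h : Stab F L U) (hD : D ≤ U) :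
    galClosure (Nat.card F) (finrank F L) D ≤ U := by
  apply Submodule.span_le.2
  simp only [Set.iUnion_subset_iff]
  rintro i - _ ⟨u, hu, rfl⟩
  exact h.iter i u (hD hu)

variable (F) in
theorem closure_stab {k : ℕ} (D : Submodule L (Fin k → L)) :
    Stab F L (galClosure (Nat.card F) (finrank F L) D) := by
  intro u hu
  induction hu using Submodule.span_induction with
  | zero =>
    convert Submodule.zero_mem _ using 1
    ext j; simp [aux_card_pos F L]
  | add x y _ _ hx hy =>
    convert Submodule.add_mem _ hx hy using 1
    ext j
    simpa using aux_add_pow F L 1 (x j) (y j)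
  | smul a x _ hx =>
    convert Submodule.smul_mem _ (a ^ Nat.card F) hx using 1
    ext j
    simp [mul_pow]
  | mem x hx =>
    simp only [Set.mem_iUnion, Finset.mem_range] at hx
    obtain ⟨i, hi, d, hd, rfl⟩ := hx
    by_cases h : i + 1 < finrank F L
    · apply Submodule.subset_span
      simp only [Set.mem_iUnion, Finset.mem_range]
      exact ⟨i + 1, h, d, hd, by ext j; simp [qpowMap, pow_succ, pow_mul]⟩
    · have h' : i + 1 = finrank F L := by omega
      convert le_closure F D hd using 1
      ext j
      simp only [qpowMap]
      rw [← pow_mul, ← pow_succ, h', aux_pow_full]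

theorem closed_iff {k : ℕ} {U : Submodule L (Fin k → L)} :
    GaloisClosed (Nat.card F) (finrank F L) U ↔ Stab F L U := by
  constructor
  · intro h
    have := closure_stab F U
    rwa [show galClosure (Nat.card F) (finrank F L) U = U from h] at this
  · intro h
    exact le_antisymm (closure_le h le_rfl) (le_closure F U)

/-- Descent. -/
theorem descent_s5 {k : ℕ} {U : Submodule L (Fin k → L)} (h : Stab F L U) (u : Fin k → L)
    (hu : u ∈ U) :
    u ∈ Submodule.span L {x | x ∈ U ∧ ∃ y : Fin k → F, x = embFq F L y} := by
  classical
  have := aux_finite F L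
  let b := Module.finBasis F L
  have key : ∀ x : L, x = ∑ i, b.traceDual i * algebraMap F L (Algebra.trace F L (x * b i)) := by
    intro x
    conv_lhs => rw [← b.traceDual.sum_repr x]
    refine Finset.sum_congr rfl fun i _ => ?_
    rw [Basis.traceDual_repr_apply, Algebra.traceForm_apply, Algebra.smul_def, mul_comm]
  have hu' : u = ∑ i, b.traceDual i • embFq F L (fun j => Algebra.trace F L (u j * b i)) := by
    ext j
    rw [Finset.sum_apply]
    exact key (u j)
  rw [hu']
  refine Submodule.sum_mem _ fun i _ => Submodule.smul_mem _ _ (Submodule.subset_span ⟨?_, _, rfl⟩)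
  have : embFq F L (fun j => Algebra.trace F L (u j * b i))
      = ∑ l ∈ Finset.range (finrank F L), qpowMap (Nat.card F) l (b i • u) := by
    ext j
    rw [Finset.sum_apply]
    simp only [qpowMap, Pi.smul_apply, smul_eq_mul, mul_comm (b i)]
    exact FiniteField.algebraMap_trace_eq_sum_pow F L (u j * b i)
  rw [this]
  exact Submodule.sum_mem _ fun l _ => h.iter l _ (Submodule.smul_mem _ _ hu)

theorem stab_span_emb {k : ℕ} (y : Fin k → F) : Stab F L (Submodule.span L {embFq F L y}) := by
  intro u hu
  obtain ⟨a, rfl⟩ := Submodule.mem_span_singleton.1 hu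
  refine Submodule.mem_span_singleton.2 ⟨a ^ Nat.card F, ?_⟩
  ext j
  have := aux_alg_pow F L (y j)
  simp [embFq, mul_pow, this]

variable (F) in
theorem wt_one_iff {k : ℕ} (x : Fin k → L) :
    wtRv (Nat.card F) (finrank F L) x = 1 ↔ x ≠ 0 ∧ Stab F L (Submodule.span L {x}) := by
  constructor
  · intro h
    have hx : x ≠ 0 := by
      rintro rfl
      have h0 : galClosure (Nat.card F) (finrank F L) (Submodule.span L {(0 : Fin k → L)}) ≤ ⊥ := by
        apply closure_le _ (by simp)
        intro u hu
        obtain rfl := (Submodule.mem_bot L).1 hu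
        convert Submodule.zero_mem _ using 1
        ext j; simp [aux_card_pos F L]
      rw [wtRv, wtR, le_bot_iff.1 h0] at h
      simp at h
    refine ⟨hx, ?_⟩
    rw [← closed_iff]
    refine (Submodule.eq_of_le_of_finrank_eq (le_closure F _) ?_).symm
    rw [finrank_span_singleton hx]
    exact h.symm
  · rintro ⟨hx, h⟩
    rw [wtRv, wtR, closed_iff.2 h, finrank_span_singleton hx]

/-- Eigenvalue form. -/
theorem eig {k : ℕ} {x : Fin k → L} (h : Stab F L (Submodule.span L {x})) :
    ∃ μ : L, ∀ j, x j ^ Nat.card F = μ * x j := by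
  obtain ⟨μ, hμ⟩ := Submodule.mem_span_singleton.1 (h x (Submodule.mem_span_singleton_self x))
  exact ⟨μ, fun j => by simpa using (congrFun hμ j).symm⟩

theorem embFq_inj {k : ℕ} : Function.Injective (embFq (n := k) F L) := by
  intro x y h
  ext j
  exact FaithfulSMul.algebraMap_injective F L (congrFun h j)

theorem emb_zero_iff {k : ℕ} (y : Fin k → F) : embFq F L y = 0 ↔ y = 0 :=
  map_eq_zero_iff _ embFq_inj

theorem emb_vecMul {k l : ℕ} (A : Matrix (Fin k) (Fin l) F) (v : Fin k → F) :
    Matrix.vecMul (embFq F L v) (A.map (algebraMap F L)) = embFq F L (Matrix.vecMul v A) := by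
  ext j
  simp [Matrix.vecMul, dotProduct, embFq]

theorem vecMul_pow {k l : ℕ} (A : Matrix (Fin k) (Fin l) F) (v : Fin k → L) :
    (fun j => (Matrix.vecMul v (A.map (algebraMap F L))) j ^ Nat.card F)
      = Matrix.vecMul (fun j => v j ^ Nat.card F) (A.map (algebraMap F L)) := by
  have := aux_finite F L
  have := Fintype.ofFinite F
  ext j
  simp only [Matrix.vecMul, dotProduct, Matrix.map_apply]
  have h := map_sum (FiniteField.frobeniusAlgHom F L) (fun i => v i * algebraMap F L (A i j))
    Finset.univ
  simp only [FiniteField.coe_frobeniusAlgHom, ← Nat.card_eq_fintype_card] at h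
  rw [h]
  simp only [mul_pow, aux_alg_pow F L]

end helpers

/-- characterizations of rank-weight preserving isomorphisms between
Galois closed spaces (rank-metric equivalences). -/
theorem stmt5 (q m n n' : ℕ) (Fq Fqm : Type) [Field Fq] [Field Fqm] [Algebra Fq Fqm]
    [Finite Fqm] (hq : Nat.card Fq = q) (hm : finrank Fq Fqm = m)
    (V : Submodule Fqm (Fin n → Fqm)) (V' : Submodule Fqm (Fin n' → Fqm))
    (hV : GaloisClosed q m V) (hV' : GaloisClosed q m V')
    (φ : V ≃ₗ[Fqm] V') :
    [ -- (1) φ sends vectors of rank weight 1 to vectors of rank weight 1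
      (∀ c : V, wtRv q m (c : Fin n → Fqm) = 1 → wtRv q m ((φ c : Fin n' → Fqm)) = 1),
      -- (2) φ preserves rank weights of vectors
      (∀ c : V, wtRv q m ((φ c : Fin n' → Fqm)) = wtRv q m (c : Fin n → Fqm)),
      -- (3) φ preserves rank weights of all subspaces
      (∀ D : Submodule Fqm (Fin n → Fqm), D ≤ V →
        wtR q m (Submodule.map (V'.subtype.comp φ.toLinearMap) (D.comap V.subtype))
          = wtR q m D),
      -- (4) φ maps Galois closed subspaces of V to Galois closed subspaces
      (∀ U : Submodule Fqm (Fin n → Fqm), U ≤ V → GaloisClosed q m U →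
        GaloisClosed q m
          (Submodule.map (V'.subtype.comp φ.toLinearMap) (U.comap V.subtype))),
      -- (5) φ(c) = β • c A for a nonzero β ∈ Fqm and a matrix A over Fq
      (∃ β : Fqm, β ≠ 0 ∧ ∃ A : Matrix (Fin n) (Fin n') Fq,
        ∀ c : V, (φ c : Fin n' → Fqm)
          = β • Matrix.vecMul (c : Fin n → Fqm) (A.map (algebraMap Fq Fqm))) ].TFAE := by
  subst hq hm
  have hVs : Stab Fq Fqm V := closed_iff.1 hV
  have hVs' : Stab Fq Fqm V' := closed_iff.1 hV'
  have hinj : Function.Injective (V'.subtype.comp φ.toLinearMap) :=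
    (Submodule.subtype_injective V').comp φ.injective
  have hmapspan : ∀ c : V, Submodule.map (V'.subtype.comp φ.toLinearMap)
      ((Submodule.span Fqm {(c : Fin n → Fqm)}).comap V.subtype)
        = Submodule.span Fqm {(φ c : Fin n' → Fqm)} := by
    intro c
    have h1 : (Submodule.span Fqm {(c : Fin n → Fqm)}).comap V.subtype
        = Submodule.span Fqm {c} := by
      rw [← Submodule.comap_map_eq_of_injective (Submodule.subtype_injective V)
        (Submodule.span Fqm {c}), Submodule.map_span]
      simp
    rw [h1, Submodule.map_span]
    simp
  have hdim : ∀ U : Submodule Fqm (Fin n → Fqm), U ≤ V →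
      finrank Fqm (Submodule.map (V'.subtype.comp φ.toLinearMap) (U.comap V.subtype))
        = finrank Fqm U := by
    intro U hU
    rw [← (Submodule.equivMapOfInjective _ hinj (U.comap V.subtype)).finrank_eq]
    exact (Submodule.comapSubtypeEquivOfLe hU).finrank_eq
  tfae_have 2 → 1 := by
    intro h c hc
    rw [h, hc]
  tfae_have 3 → 2 := by
    intro h c
    have := h (Submodule.span Fqm {(c : Fin n → Fqm)})
      ((Submodule.span_singleton_le_iff_mem _ _).2 c.2)
    rwa [hmapspan] at this
  tfae_have 3 → 4 := by
    intro h U hU hUc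
    have h1 := h U hU
    refine (Submodule.eq_of_le_of_finrank_eq (le_closure Fq _) ?_).symm
    rw [hdim U hU]
    refine Eq.trans ?_ h1.symm
    rw [wtR, hUc]
  tfae_have 4 → 1 := by
    intro h c hc
    rw [wt_one_iff] at hc ⊢
    have h1 := h (Submodule.span Fqm {(c : Fin n → Fqm)})
      ((Submodule.span_singleton_le_iff_mem _ _).2 c.2) (closed_iff.2 hc.2)
    rw [hmapspan, closed_iff] at h1
    refine ⟨?_, h1⟩
    intro h0
    apply hc.1
    have : φ c = 0 := Subtype.ext h0
    rw [map_eq_zero_iff _ φ.injective] at this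
    rw [this]; rfl
  tfae_have 5 → 3 := by
    rintro ⟨β, hβ, A, hA⟩ D hD
    have hmap : ∀ U : Submodule Fqm (Fin n → Fqm), U ≤ V →
        Submodule.map (V'.subtype.comp φ.toLinearMap) (U.comap V.subtype)
          = Submodule.map (A.map (algebraMap Fq Fqm)).vecMulLinear U := by
      intro U hU
      ext y
      simp only [Submodule.mem_map, Submodule.mem_comap]
      constructor
      · rintro ⟨c, hc, rfl⟩
        refine ⟨β • (c : Fin n → Fqm), U.smul_mem _ hc, ?_⟩
        simp [hA c]
      · rintro ⟨c, hc, rfl⟩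
        refine ⟨β⁻¹ • ⟨c, hU hc⟩, U.smul_mem _ hc, ?_⟩
        have := hA (β⁻¹ • ⟨c, hU hc⟩)
        simp only [Submodule.coe_smul] at this
        rw [Matrix.smul_vecMul, smul_smul, mul_inv_cancel₀ hβ, one_smul] at this
        exact this
    have hstab : ∀ U : Submodule Fqm (Fin n → Fqm), Stab Fq Fqm U →
        Stab Fq Fqm (Submodule.map (A.map (algebraMap Fq Fqm)).vecMulLinear U) := by
      rintro U hU _ ⟨c, hc, rfl⟩
      exact ⟨_, hU c hc, (vecMul_pow A c).symm⟩
    have hcl : galClosure (Nat.card Fq) (finrank Fq Fqm)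
        (Submodule.map (A.map (algebraMap Fq Fqm)).vecMulLinear D)
        = Submodule.map (A.map (algebraMap Fq Fqm)).vecMulLinear
          (galClosure (Nat.card Fq) (finrank Fq Fqm) D) := by
      apply le_antisymm
      · exact closure_le (hstab _ (closure_stab Fq D)) (Submodule.map_mono (le_closure Fq D))
      · rw [Submodule.map_le_iff_le_comap]
        apply closure_le
        · intro u hu
          have := closure_stab Fq _ _ hu
          rw [Submodule.mem_comap]
          rwa [Matrix.vecMulLinear_apply, vecMul_pow] at this
        · rw [← Submodule.map_le_iff_le_comap]
          exact le_closure Fq _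
    have hDV := closure_le hVs hD
    rw [wtR, hmap D hD, hcl, ← hmap _ hDV, hdim _ hDV, wtR]
  tfae_have 1 → 5 := by
    intro h
    -- the F-rational part of V
    let VF : Submodule Fq (Fin n → Fq) := (V.restrictScalars Fq).comap (embFq Fq Fqm)
    let f : VF →ₗ[Fq] (Fin n' → Fqm) :=
      ((V'.subtype.comp φ.toLinearMap).restrictScalars Fq).comp
        (((embFq Fq Fqm).comp VF.subtype).codRestrict (V.restrictScalars Fq) (fun v => v.2))
    have hfdef : ∀ v : VF, f v = (φ ⟨embFq Fq Fqm v.1, v.2⟩ : Fin n' → Fqm) := fun v => rfl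
    have hf0 : ∀ v : VF, v ≠ 0 → f v ≠ 0 ∧ Stab Fq Fqm (Submodule.span Fqm {f v}) := by
      intro v hv
      rw [hfdef, ← wt_one_iff]
      apply h
      rw [wt_one_iff]
      refine ⟨?_, stab_span_emb _⟩
      rw [Ne, emb_zero_iff]
      exact fun h0 => hv (Subtype.ext h0)
    have hsc : ∀ (v w : VF) (a : Fqm), f v = a • f w → w ≠ 0 → a ^ Nat.card Fq = a := by
      intro v w a hvw hw
      have h1 : embFq Fq Fqm v.1 = a • embFq Fq Fqm w.1 := by
        have : (⟨embFq Fq Fqm v.1, v.2⟩ : V) = a • ⟨embFq Fq Fqm w.1, w.2⟩ := by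
          apply hinj
          rw [map_smul]
          exact hvw
        exact congrArg Subtype.val this
      have : ∃ j, w.1 j ≠ 0 := by
        by_contra hcon
        push Not at hcon
        exact hw (Subtype.ext (funext hcon))
      obtain ⟨j, hj⟩ := this
      have h2 : algebraMap Fq Fqm (v.1 j) = a * algebraMap Fq Fqm (w.1 j) := congrFun h1 j
      have h3 : algebraMap Fq Fqm (w.1 j) ≠ 0 := by simpa using hj
      have h4 : a = algebraMap Fq Fqm (v.1 j / w.1 j) := by
        rw [map_div₀, h2, mul_div_cancel_right₀ _ h3]
      rw [h4, aux_alg_pow]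
    -- all eigenvalues agree
    have heig : ∀ (v w : VF) (μ ν : Fqm), v ≠ 0 → w ≠ 0 →
        (∀ j, f v j ^ Nat.card Fq = μ * f v j) → (∀ j, f w j ^ Nat.card Fq = ν * f w j) →
        μ = ν := by
      intro v w μ ν hv hw hμ hν
      have hfw := (hf0 w hw).1
      have hfv := (hf0 v hv).1
      by_cases hdep : ∃ a : Fqm, f v = a • f w
      · obtain ⟨a, ha⟩ := hdep
        have haa := hsc v w a ha hw
        obtain ⟨j, hj⟩ := Function.ne_iff.1 hfv
        have h1 := hμ j
        have h2 : f v j = a * f w j := congrFun ha j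
        rw [h2, mul_pow, haa, hν j] at h1
        apply mul_right_cancel₀ hj
        linear_combination -h1 + (μ - ν) * h2
      · have hne : v + w ≠ 0 := by
          intro h0
          apply hdep
          refine ⟨-1, ?_⟩
          have : v = -w := eq_neg_of_add_eq_zero_left h0
          rw [this, map_neg, neg_one_smul]
        obtain ⟨ρ, hρ⟩ := eig (hf0 _ hne).2
        have hrel : ∀ j, (μ - ρ) * f v j = (ρ - ν) * f w j := by
          intro j
          have h1 := hρ j
          have h2 := aux_add_pow Fq Fqm 1 (f v j) (f w j)
          rw [pow_one, hμ j, hν j] at h2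
          rw [map_add, Pi.add_apply, h2] at h1
          linear_combination h1
        have hμρ : μ = ρ := by
          by_contra hcon
          apply hdep
          refine ⟨(μ - ρ)⁻¹ * (ρ - ν), ?_⟩
          ext j
          rw [Pi.smul_apply, smul_eq_mul, mul_assoc, ← hrel j,
            inv_mul_cancel_left₀ (sub_ne_zero.2 hcon)]
        obtain ⟨j, hj⟩ := Function.ne_iff.1 hfw
        have h1 := hrel j
        rw [hμρ, sub_self, zero_mul] at h1
        rw [hμρ]
        exact sub_eq_zero.1 ((mul_eq_zero.1 h1.symm).resolve_right hj)
    -- choose β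
    have hβ : ∃ β : Fqm, β ≠ 0 ∧ ∀ v : VF, ∃ y : Fin n' → Fq, embFq Fq Fqm y = β⁻¹ • f v := by
      by_cases hz : ∃ v : VF, v ≠ 0
      · obtain ⟨v, hv⟩ := hz
        obtain ⟨hfv, hst⟩ := hf0 v hv
        obtain ⟨μ, hμ⟩ := eig hst
        obtain ⟨j, hj⟩ := Function.ne_iff.1 hfv
        refine ⟨f v j, hj, fun w => ?_⟩
        have hfix : ∀ l, ((f v j)⁻¹ • f w) l ^ Nat.card Fq = ((f v j)⁻¹ • f w) l := by
          intro l
          by_cases hw : w = 0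
          · simp [hw, aux_card_pos Fq Fqm]
          obtain ⟨ν, hν⟩ := eig (hf0 w hw).2
          have hμν := heig v w μ ν hv hw hμ hν
          have hμ0 : μ ≠ 0 := by
            intro h0
            have := hμ j
            rw [h0, zero_mul] at this
            exact hj (pow_eq_zero_iff (aux_card_pos Fq Fqm) |>.1 this)
          rw [Pi.smul_apply, smul_eq_mul, mul_pow, inv_pow, hμ j, hν l, ← hμν]
          have hj' : f v j ≠ 0 := hj
          field_simp
        choose y hy using fun l => aux_fixed Fq Fqm _ (hfix l)
        exact ⟨y, funext hy⟩
      · push Not at hz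
        refine ⟨1, one_ne_zero, fun v => ⟨0, ?_⟩⟩
        rw [hz v]; simp
    obtain ⟨β, hβ0, hβ⟩ := hβ
    choose g hg using hβ
    let G : VF →ₗ[Fq] (Fin n' → Fq) :=
      { toFun := g
        map_add' := fun v w => embFq_inj (L := Fqm) (by
          rw [map_add, hg, hg, hg, map_add, smul_add])
        map_smul' := fun a v => embFq_inj (L := Fqm) (by
          rw [map_smul, hg, hg, map_smul, smul_comm]; rfl) }
    obtain ⟨T, hT⟩ := LinearMap.exists_extend G
    refine ⟨β, hβ0, LinearMap.toMatrixRight' T, ?_⟩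
    have hTm : ∀ v, Matrix.vecMul v (LinearMap.toMatrixRight' T) = T v := by
      intro v
      rw [← Matrix.toLinearMapRight'_apply]
      simp
    intro c
    have hspan := descent_s5 hVs c.1 c.2
    suffices H : ∀ x (hx : x ∈ Submodule.span Fqm
        {x | x ∈ V ∧ ∃ y : Fin n → Fq, x = embFq Fq Fqm y}) (hxV : x ∈ V),
        (φ ⟨x, hxV⟩ : Fin n' → Fqm)
          = β • Matrix.vecMul x ((LinearMap.toMatrixRight' T).map (algebraMap Fq Fqm)) from
      H c.1 hspan c.2
    have hsub : Submodule.span Fqm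
        {x | x ∈ V ∧ ∃ y : Fin n → Fq, x = embFq Fq Fqm y} ≤ V :=
      Submodule.span_le.2 fun x hx => hx.1
    intro x hx
    induction hx using Submodule.span_induction with
    | mem x hx =>
      intro hxV
      obtain ⟨-, y, rfl⟩ := hx
      rw [emb_vecMul, hTm]
      have h1 : T y = g ⟨y, hxV⟩ := congrArg (fun F => F ⟨y, hxV⟩) hT
      rw [h1, hg, smul_smul, mul_inv_cancel₀ hβ0, one_smul]
      exact (hfdef ⟨y, hxV⟩).symm
    | zero =>
      intro hxV
      rw [Matrix.zero_vecMul, smul_zero]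
      have : (⟨0, hxV⟩ : V) = 0 := rfl
      rw [this, map_zero]; rfl
    | add x y hx hy ihx ihy =>
      intro hxV
      have : (⟨x + y, hxV⟩ : V) = ⟨x, hsub hx⟩ + ⟨y, hsub hy⟩ := rfl
      rw [this, map_add, Submodule.coe_add, ihx, ihy, Matrix.add_vecMul, smul_add]
    | smul a x hx ihx =>
      intro hxV
      have : (⟨a • x, hxV⟩ : V) = a • ⟨x, hsub hx⟩ := rfl
      rw [this, map_smul, Submodule.coe_smul, ihx, Matrix.smul_vecMul, smul_comm]
  tfae_finish

end RankPaper
end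

section
/- Assume n ≤ m. For every F_{q^m}-linear subspace D ⊆ F_{q^m}^n, wt_H(D) = max{ wt_R(φ(D)) : φ is a Hamming equivalence of F_{q^m}^n }, where a Hamming equivalence (monomial map) of F_{q^m}^n is an F_{q^m}-linear map of the form φ(c_1, ..., c_n) = (γ_1 c_{σ(1)}, ..., γ_n c_{σ(n)}) for a permutation σ of {1, ..., n} and nonzero scalars γ_1, ..., γ_n ∈ F_{q^m}. -/
open Submodule Module

namespace RankPaper

variable {n : ℕ}

/-- A monomial map (Hamming equivalence) of `Fqm^n`:
`φ(c) i = γ i * c (σ i)` for a permutation `σ` and nonzero scalars `γ`. -/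
def monomialMap {Fqm : Type} [Field Fqm] (σ : Equiv.Perm (Fin n)) (γ : Fin n → Fqm) :
    (Fin n → Fqm) →ₗ[Fqm] (Fin n → Fqm) where
  toFun c := fun i => γ i * c (σ i)
  map_add' x y := by funext i; simp [mul_add]
  map_smul' a x := by funext i; simp only [Pi.smul_apply, smul_eq_mul, RingHom.id_apply]; ring

/-- Columns of the Moore matrix of a basis are linearly independent. -/
theorem moore_indep (q m : ℕ) (Fq Fqm : Type) [Field Fq] [Field Fqm] [Algebra Fq Fqm]
    [Finite Fqm] (hq : Nat.card Fq = q) (hm : finrank Fq Fqm = m) :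
    ∃ β : Fin m → Fqm, ∀ a : Fin m → Fqm,
      (∀ j : Fin m, ∑ i, a i * β i ^ q ^ (j : ℕ) = 0) → a = 0 := by
  classical
  have : Finite Fq := Finite.of_injective _ (algebraMap Fq Fqm).injective
  have := Fintype.ofFinite Fq
  subst hm
  subst hq
  rw [Nat.card_eq_fintype_card]
  let b := Module.finBasis Fq Fqm
  refine ⟨b, fun a ha => ?_⟩
  let M : Matrix (Fin (finrank Fq Fqm)) (Fin (finrank Fq Fqm)) Fqm :=
    Matrix.of fun j i => b i ^ (Fintype.card Fq) ^ (j : ℕ)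
  have hpow : ∀ (j : ℕ) (x : Fqm), (FiniteField.frobeniusAlgHom Fq Fqm ^ j) x
      = x ^ (Fintype.card Fq) ^ j := by
    intro j x
    rw [AlgHom.coe_pow, FiniteField.coe_frobeniusAlgHom, pow_iterate]
  have hli := (linearIndependent_algHom_toLinearMap Fq Fqm Fqm).comp _
    (FiniteField.bijective_frobeniusAlgHom_pow Fq Fqm).1
  rw [Fintype.linearIndependent_iff] at hli
  have hrow : LinearIndependent Fqm M.row := by
    rw [Fintype.linearIndependent_iff]
    intro c hc
    apply hli c
    apply b.ext
    intro i
    have h := congrFun hc i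
    simp only [Finset.sum_apply, Pi.smul_apply, Matrix.row, M, Matrix.of_apply,
      smul_eq_mul, Pi.zero_apply] at h
    simp only [Function.comp_apply, LinearMap.sum_apply, LinearMap.smul_apply,
      AlgHom.toLinearMap_apply, hpow, smul_eq_mul, LinearMap.zero_apply]
    exact h
  have hcol : LinearIndependent Fqm M.col :=
    Matrix.linearIndependent_cols_iff_isUnit.2 (Matrix.linearIndependent_rows_iff_isUnit.1 hrow)
  rw [Fintype.linearIndependent_iff] at hcol
  funext i
  apply hcol a
  funext j
  simpa [M, Matrix.col] using ha j

/-- A large field gives a word of full support. -/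
theorem exists_full_support {n : ℕ} {K : Type} [Field K] [Finite K] (hn : n < Nat.card K)
    (D : Submodule K (Fin n → K)) : ∃ d ∈ D, ∀ i, (∃ e ∈ D, e i ≠ 0) → d i ≠ 0 := by
  classical
  let S := {i : Fin n // ∃ e ∈ D, e i ≠ 0}
  let p : S → Submodule K D := fun i => LinearMap.ker ((LinearMap.proj i.1).domRestrict D)
  have h1 : ∀ i, p i ≠ ⊤ := by
    rintro ⟨i, e, he, hei⟩ h
    have : (⟨e, he⟩ : D) ∈ p ⟨i, e, he, hei⟩ := by rw [h]; trivial
    exact hei (by simpa [p] using this)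
  have hc : Fintype.card S ≤ n := by
    simpa using Fintype.card_subtype_le (fun i : Fin n => ∃ e ∈ D, e i ≠ 0)
  have h2 := Submodule.iUnion_ssubset_of_forall_ne_top_of_card_lt Finset.univ p h1 (by
    rw [ENat.card_eq_coe_natCard, Finset.card_univ]
    exact_mod_cast lt_of_le_of_lt hc hn)
  obtain ⟨x, -, hx⟩ := Set.exists_of_ssubset h2
  refine ⟨x.1, x.2, fun i hi h0 => hx ?_⟩
  simp only [Set.mem_iUnion]
  exact ⟨⟨i, hi⟩, Finset.mem_univ _, by simpa [p] using h0⟩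

theorem wtR_le_wtH {n : ℕ} (q m : ℕ) {K : Type} [Field K] (hq : q ≠ 0)
    (D : Submodule K (Fin n → K)) : wtR q m D ≤ wtH D := by
  classical
  let S : Set (Fin n) := {i | ∃ d ∈ D, d i ≠ 0}
  let ρ : (Fin n → K) →ₗ[K] (S → K) := LinearMap.funLeft K K (Subtype.val : S → Fin n)
  have hz : ∀ v ∈ galClosure q m D, ∀ i, i ∉ S → v i = 0 := by
    intro v hv i hi
    have hle : galClosure q m D ≤ LinearMap.ker (LinearMap.proj i : (Fin n → K) →ₗ[K] K) := by
      refine Submodule.span_le.2 ?_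
      intro w hw
      simp only [Set.mem_iUnion] at hw
      obtain ⟨j, -, d, hd, rfl⟩ := hw
      have : d i = 0 := by
        by_contra h
        exact hi ⟨d, hd, h⟩
      simp [qpowMap, this, hq]
    simpa using hle hv
  have hinj : Function.Injective (ρ.domRestrict (galClosure q m D)) := by
    rw [← LinearMap.ker_eq_bot, LinearMap.ker_eq_bot']
    rintro ⟨v, hv⟩ h
    ext i
    by_cases hi : i ∈ S
    · exact congrFun h ⟨i, hi⟩
    · exact hz v hv i hi
  have := LinearMap.finrank_le_finrank_of_injective hinj
  rw [Module.finrank_fintype_fun_eq_card, ← Nat.card_eq_fintype_card,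
    Nat.card_coe_set_eq] at this
  exact this

theorem wtH_monomial {n : ℕ} {K : Type} [Field K] (D : Submodule K (Fin n → K))
    (σ : Equiv.Perm (Fin n)) (γ : Fin n → K) (hγ : ∀ i, γ i ≠ 0) :
    wtH (D.map (monomialMap σ γ)) = wtH D := by
  have : {i : Fin n | ∃ d ∈ D, d i ≠ 0} =
      σ '' {i : Fin n | ∃ d ∈ D.map (monomialMap σ γ), d i ≠ 0} := by
    rw [Equiv.image_eq_preimage_symm]
    ext i
    simp [monomialMap, hγ]
  unfold wtH
  rw [this, Set.ncard_image_of_injective _ σ.injective]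

theorem exists_wtR_ge (q m n : ℕ) (Fq Fqm : Type) [Field Fq] [Field Fqm] [Algebra Fq Fqm]
    [Finite Fqm] (hq : Nat.card Fq = q) (hm : finrank Fq Fqm = m) (hnm : n ≤ m)
    (D : Submodule Fqm (Fin n → Fqm)) :
    ∃ γ : Fin n → Fqm, (∀ i, γ i ≠ 0) ∧ wtH D ≤ wtR q m (D.map (monomialMap 1 γ)) := by
  classical
  have : Finite Fq := Finite.of_injective _ (algebraMap Fq Fqm).injective
  have hcard : Nat.card Fqm = q ^ m := by
    rw [← hq, ← hm]; exact Module.natCard_eq_pow_finrank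
  have hq1 : 1 < q := hq ▸ Finite.one_lt_card
  have hn : n < Nat.card Fqm := by
    rw [hcard]; exact lt_of_le_of_lt hnm (Nat.lt_pow_self hq1)
  obtain ⟨d, hd, hfull⟩ := exists_full_support hn D
  obtain ⟨β, hβ⟩ := moore_indep q m Fq Fqm hq hm
  have hβ0 : ∀ i, β i ≠ 0 := by
    intro i h
    have := congrFun (hβ (Pi.single i 1) (by
      intro j
      rw [Finset.sum_eq_single i]
      · simp [h]; omega
      · intro k _ hk; simp [hk]
      · simp)) i
    simp at this
  let ι : Fin n → Fin m := Fin.castLE hnm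
  let γ : Fin n → Fqm := fun i => if d i = 0 then 1 else β (ι i) / d i
  have hγ : ∀ i, γ i ≠ 0 := by
    intro i
    by_cases h : d i = 0
    · simp [γ, h]
    · simp [γ, h, hβ0]
  refine ⟨γ, hγ, ?_⟩
  let S : Set (Fin n) := {i | ∃ d ∈ D, d i ≠ 0}
  let ρ : (Fin n → Fqm) →ₗ[Fqm] (S → Fqm) :=
    LinearMap.funLeft Fqm Fqm (Subtype.val : S → Fin n)
  set G := galClosure q m (D.map (monomialMap 1 γ)) with hG
  have htop : G.map ρ = ⊤ := by
    by_contra hne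
    obtain ⟨f, hf0, hf⟩ := Submodule.exists_le_ker_of_lt_top _ (lt_top_iff_ne_top.2 hne)
    let a : S → Fqm := fun i => f (Pi.single i 1)
    have hfa : ∀ x, f x = ∑ i, a i * x i := by
      intro x
      rw [LinearMap.pi_apply_eq_sum_univ f x]
      refine Finset.sum_congr rfl fun i _ => ?_
      rw [smul_eq_mul, mul_comm]
      congr 2
      funext j
      simp [Pi.single_apply, eq_comm]
    let e : S → Fin m := fun i => ι i.1
    have he : Function.Injective e :=
      (Fin.castLE_injective hnm).comp Subtype.val_injective
    have hrel : ∀ j : Fin m, ∑ i, a i * β (e i) ^ q ^ (j : ℕ) = 0 := by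
      intro j
      have hmem : qpowMap q j (monomialMap 1 γ d) ∈ G := by
        refine Submodule.subset_span ?_
        simp only [Set.mem_iUnion]
        exact ⟨j, by simp, _, Submodule.mem_map_of_mem hd, rfl⟩
      have h0 : f (ρ (qpowMap q j (monomialMap 1 γ d))) = 0 :=
        hf (Submodule.mem_map_of_mem hmem)
      rw [hfa] at h0
      refine Eq.trans ?_ h0
      refine Finset.sum_congr rfl fun i _ => ?_
      have hdi : d i.1 ≠ 0 := hfull _ i.2
      simp [ρ, LinearMap.funLeft_apply, qpowMap, monomialMap, γ, hdi, e]
    let A : Fin m → Fqm := Function.extend e a 0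
    have hA : A = 0 := by
      apply hβ
      intro j
      rw [← hrel j]
      symm
      refine Finset.sum_of_injOn e he.injOn (by simp) ?_ ?_
      · intro i _ hi
        have : A i = 0 := Function.extend_apply' _ _ _ (by simpa using hi)
        simp [this]
      · intro i _
        simp [A, he.extend_apply]
    apply hf0
    ext i
    have : a i = 0 := by
      have := congrFun hA (e i)
      simpa [A, he.extend_apply] using this
    simpa using this
  have h1 : finrank Fqm (G.map ρ) ≤ finrank Fqm G := Submodule.finrank_map_le ρ G
  rw [htop, finrank_top, Module.finrank_fintype_fun_eq_card, ← Nat.card_eq_fintype_card,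
    Nat.card_coe_set_eq] at h1
  exact h1

/-- if `n ≤ m`, then for every subspace `D ⊆ Fqm^n`,
`wt_H(D) = max { wt_R(φ(D)) : φ a Hamming equivalence of Fqm^n }`. -/
theorem stmt6 (q m n : ℕ) (Fq Fqm : Type) [Field Fq] [Field Fqm] [Algebra Fq Fqm]
    [Finite Fqm] (hq : Nat.card Fq = q) (hm : finrank Fq Fqm = m) (hnm : n ≤ m)
    (D : Submodule Fqm (Fin n → Fqm)) :
    wtH D = sSup { w | ∃ σ : Equiv.Perm (Fin n), ∃ γ : Fin n → Fqm,
        (∀ i, γ i ≠ 0) ∧ w = wtR q m (D.map (monomialMap σ γ)) } := by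
  have : Finite Fq := Finite.of_injective _ (algebraMap Fq Fqm).injective
  have hq0 : q ≠ 0 := by rw [← hq]; exact Nat.card_pos.ne'
  have hub : ∀ w ∈ { w | ∃ σ : Equiv.Perm (Fin n), ∃ γ : Fin n → Fqm,
      (∀ i, γ i ≠ 0) ∧ w = wtR q m (D.map (monomialMap σ γ)) }, w ≤ wtH D := by
    rintro w ⟨σ, γ, hγ, rfl⟩
    rw [← wtH_monomial D σ γ hγ]
    exact wtR_le_wtH q m hq0 _
  obtain ⟨γ, hγ, hle⟩ := exists_wtR_ge q m n Fq Fqm hq hm hnm D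
  apply le_antisymm
  · exact hle.trans (le_csSup ⟨_, hub⟩ ⟨1, γ, hγ, rfl⟩)
  · exact csSup_le ⟨_, 1, γ, hγ, rfl⟩ hub

end RankPaper
end

section
/- (Alternative Singleton bound.) If n > m, then for every F_{q^m}-linear code C ⊆ F_{q^m}^n of dimension k and every 1 ≤ r ≤ k, one has d_{R,r}(C) ≤ (m/n)(n − k) + m(r − 1) + 1; equivalently, n · (d_{R,r}(C) − m(r − 1) − 1) ≤ m(n − k). -/
open Submodule Module

namespace RankPaper

variable {n : ℕ}

/-- Spans of vectors with entries in the small field. -/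
def spanEmb {Fq : Type} (Fqm : Type) [Field Fq] [Field Fqm] [Algebra Fq Fqm]
    (S : Finset (Fin n → Fq)) : Submodule Fqm (Fin n → Fqm) :=
  Submodule.span Fqm (embFq Fq Fqm '' (S : Set (Fin n → Fq)))

theorem spanEmb_closed (q m : ℕ) (Fq Fqm : Type) [Field Fq] [Field Fqm] [Algebra Fq Fqm]
    [Finite Fqm] (hq : Nat.card Fq = q) (hm : finrank Fq Fqm = m)
    (S : Finset (Fin n → Fq)) : GaloisClosed q m (spanEmb Fqm S) := by
  have : Finite Fq := Finite.of_injective _ (algebraMap Fq Fqm).injective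
  have := Fintype.ofFinite Fq
  have hm0 : 0 < m := hm ▸ Module.finrank_pos
  have hq' : Fintype.card Fq = q := by rw [← hq, Nat.card_eq_fintype_card]
  have key : ∀ i, ∃ f : Fqm →ₐ[Fq] Fqm, ∀ x, f x = x ^ q ^ i := by
    intro i
    refine ⟨FiniteField.frobeniusAlgHom Fq Fqm ^ i, ?_⟩
    intro x
    induction i with
    | zero => simp
    | succ i ih =>
      rw [pow_succ', AlgHom.mul_apply, ih, FiniteField.coe_frobeniusAlgHom]
      simp [hq', pow_succ, pow_mul]
  unfold GaloisClosed galClosure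
  apply le_antisymm
  · rw [Submodule.span_le]
    intro v hv
    simp only [Set.mem_iUnion] at hv
    obtain ⟨i, -, w, hw, rfl⟩ := hv
    obtain ⟨f, hf⟩ := key i
    have e : ∀ w : Fin n → Fqm, qpowMap q i w = fun j => f (w j) := by
      intro w; funext j; simp [qpowMap, hf]
    rw [e]
    simp only [SetLike.mem_coe] at hw ⊢
    unfold spanEmb at hw
    induction hw using Submodule.span_induction with
    | mem x hx =>
      obtain ⟨a, ha, rfl⟩ := hx
      have : (fun j => f (embFq Fq Fqm a j)) = embFq Fq Fqm a := by
        funext j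
        simp [embFq]
      rw [this]
      exact Submodule.subset_span ⟨a, ha, rfl⟩
    | zero => 
      have : (fun j : Fin n => f ((0 : Fin n → Fqm) j)) = 0 := by funext j; simp
      rw [this]; exact Submodule.zero_mem _
    | add x y _ _ hx hy =>
      have : (fun j => f ((x + y) j)) = (fun j => f (x j)) + (fun j => f (y j)) := by
        funext j; simp
      rw [this]; exact Submodule.add_mem _ hx hy
    | smul a x _ hx =>
      have : (fun j => f ((a • x) j)) = f a • (fun j => f (x j)) := by
        funext j; simp
      rw [this]; exact Submodule.smul_mem _ _ hx
  · intro v hv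
    apply Submodule.subset_span
    simp only [Set.mem_iUnion]
    exact ⟨0, Finset.mem_range.2 hm0, v, hv, by funext j; simp [qpowMap]⟩

theorem mem_spanEmb (Fq Fqm : Type) [Field Fq] [Field Fqm] [Algebra Fq Fqm]
    [Finite Fqm] (W : Submodule Fq Fqm) (c : Fin n → Fqm) (hc : ∀ j, c j ∈ W) :
    ∃ S : Finset (Fin n → Fq), S.card ≤ finrank Fq W ∧ c ∈ spanEmb Fqm S := by
  classical
  have : FiniteDimensional Fq Fqm := Module.Finite.of_finite
  let b := Module.finBasis Fq W
  let a : Fin (finrank Fq W) → Fin n → Fq := fun l j => b.repr ⟨c j, hc j⟩ l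
  refine ⟨Finset.univ.image a, Finset.card_image_le.trans (by simp), ?_⟩
  have : c = ∑ l, (b l : Fqm) • embFq Fq Fqm (a l) := by
    funext j
    have h := congrArg (Subtype.val) (b.sum_repr ⟨c j, hc j⟩)
    simp only [AddSubmonoidClass.coe_finsetSum, Submodule.coe_smul] at h
    rw [Finset.sum_apply]
    conv_lhs => rw [← h]
    refine Finset.sum_congr rfl fun l _ => ?_
    simp [embFq, a, Algebra.smul_def, mul_comm]
  rw [this]
  refine Submodule.sum_mem _ fun l _ => Submodule.smul_mem _ _ (Submodule.subset_span ?_)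
  exact ⟨a l, by simp, rfl⟩

theorem exists_first (m k t : ℕ) (Fq Fqm : Type) [Field Fq] [Field Fqm] [Algebra Fq Fqm]
    [Finite Fqm] (hm : finrank Fq Fqm = m)
    (C : Submodule Fqm (Fin n → Fqm)) (hk : finrank Fqm C = k)
    (ht : t ≤ m) (htn : m * n < n * t + m * k) :
    ∃ S : Finset (Fin n → Fq), S.card ≤ t ∧ 1 ≤ finrank Fqm ↥(C ⊓ spanEmb Fqm S) := by
  have : FiniteDimensional Fq Fqm := Module.Finite.of_finite
  obtain ⟨W, hW⟩ : ∃ W : Submodule Fq Fqm, finrank Fq W = t := by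
    obtain ⟨f, hf⟩ := exists_linearIndependent_of_le_finrank (R := Fq) (M := Fqm) (n := t) (by omega)
    exact ⟨Submodule.span Fq (Set.range f), by simpa using finrank_span_eq_card hf⟩
  let P : Submodule Fq (Fin n → Fqm) := LinearMap.range (W.subtype.compLeft (Fin n))
  have hP : finrank Fq P = n * t := by
    rw [LinearMap.finrank_range_of_inj]
    · rw [Module.finrank_pi_fintype]; simp [hW]
    · intro x y h
      funext j
      exact Subtype.ext (congrFun h j)
  have hC : finrank Fq (C.restrictScalars Fq) = m * k := by
    rw [← hk, ← hm]
    exact (Module.finrank_mul_finrank Fq Fqm C).symm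
  have hnd : ¬ Disjoint P (C.restrictScalars Fq) := by
    intro hd
    have h := Submodule.finrank_add_finrank_le_of_disjoint hd
    rw [hP, hC, Module.finrank_pi_fintype] at h
    simp [hm] at h
    nlinarith
  rw [Submodule.disjoint_def] at hnd
  push Not at hnd
  obtain ⟨c, hcP, hcC, hc0⟩ := hnd
  obtain ⟨w, rfl⟩ := hcP
  obtain ⟨S, hS, hcS⟩ := mem_spanEmb Fq Fqm W (W.subtype.compLeft (Fin n) w)
    (fun j => (w j).2)
  refine ⟨S, hW ▸ hS, ?_⟩
  apply Submodule.one_le_finrank_iff.2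
  intro hb
  apply hc0
  rw [← Submodule.mem_bot Fqm, ← hb]
  exact ⟨hcC, hcS⟩

theorem exists_all (m k t : ℕ) (Fq Fqm : Type) [Field Fq] [Field Fqm] [Algebra Fq Fqm]
    [Finite Fqm] (hm : finrank Fq Fqm = m)
    (C : Submodule Fqm (Fin n → Fqm)) (hk : finrank Fqm C = k)
    (ht : t ≤ m) (htn : m * n < n * t + m * k) (s : ℕ) (hs : s + 1 ≤ k) :
    ∃ S : Finset (Fin n → Fq), S.card ≤ t + m * s ∧
      s + 1 ≤ finrank Fqm ↥(C ⊓ spanEmb Fqm S) := by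
  classical
  induction s with
  | zero => simpa using exists_first m k t Fq Fqm hm C hk ht htn
  | succ s ih =>
    obtain ⟨S, hS, h⟩ := ih (by omega)
    by_cases hcase : s + 1 + 1 ≤ finrank Fqm ↥(C ⊓ spanEmb Fqm S)
    · exact ⟨S, hS.trans (by gcongr; omega), hcase⟩
    have hn : ¬ C ≤ spanEmb Fqm S := by
      intro hle
      rw [inf_eq_left.2 hle] at hcase
      omega
    obtain ⟨c, hc, hcS⟩ := Set.not_subset.1 hn
    obtain ⟨T, hT, hcT⟩ := mem_spanEmb Fq Fqm ⊤ c (fun _ => Submodule.mem_top)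
    rw [finrank_top, hm] at hT
    refine ⟨S ∪ T, (Finset.card_union_le _ _).trans (by rw [mul_add]; omega), ?_⟩
    have h1 : spanEmb Fqm S ≤ spanEmb Fqm (S ∪ T) :=
      Submodule.span_mono (Set.image_mono (by simp))
    have h2 : spanEmb Fqm T ≤ spanEmb Fqm (S ∪ T) :=
      Submodule.span_mono (Set.image_mono (by simp))
    have hlt : C ⊓ spanEmb Fqm S < C ⊓ spanEmb Fqm (S ∪ T) := by
      refine lt_of_le_of_ne (inf_le_inf_left _ h1) fun he => hcS ?_
      have : c ∈ C ⊓ spanEmb Fqm (S ∪ T) := ⟨hc, h2 hcT⟩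
      rw [← he] at this
      exact this.2
    have := Submodule.finrank_lt_finrank_of_lt hlt
    omega

/-- alternative Singleton bound: if `n > m`, then for every linear code
`C ⊆ Fqm^n` of dimension `k` and every `1 ≤ r ≤ k`,
`n · (d_{R,r}(C) − m(r−1) − 1) ≤ m(n − k)`. -/
theorem stmt11 (q m n k r : ℕ) (Fq Fqm : Type) [Field Fq] [Field Fqm] [Algebra Fq Fqm]
    [Finite Fqm] (hq : Nat.card Fq = q) (hm : finrank Fq Fqm = m) (hmn : m < n)
    (C : Submodule Fqm (Fin n → Fqm)) (hk : finrank Fqm C = k)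
    (hr1 : 1 ≤ r) (hrk : r ≤ k) :
    (n : ℤ) * ((dR q m C r : ℤ) - (m : ℤ) * ((r : ℤ) - 1) - 1)
      ≤ (m : ℤ) * ((n : ℤ) - (k : ℤ)) := by
  have hn : 0 < n := by omega
  have hFin : FiniteDimensional Fq Fqm := Module.Finite.of_finite
  have hm0 : 0 < m := hm ▸ Module.finrank_pos
  have hkn : k ≤ n := by
    have := Submodule.finrank_le C
    simpa [hk] using this
  obtain ⟨u, rfl⟩ := Nat.exists_eq_add_of_le hkn
  set t := m * u / (k + u) + 1 with ht
  have h1 : (k + u) * (t - 1) ≤ m * u := by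
    simpa [ht] using Nat.mul_div_le (m * u) (k + u)
  have h2 : m * u < (k + u) * t := by
    rw [ht]; exact Nat.lt_mul_div_succ _ hn
  have h3 : t ≤ m := by
    rw [ht, Nat.succ_le_iff, Nat.div_lt_iff_lt_mul hn]
    nlinarith
  obtain ⟨S, hS, hr⟩ := exists_all m k t Fq Fqm hm C hk h3 (by nlinarith) (r - 1) (by omega)
  have hd : dR q m C r ≤ t + m * (r - 1) := by
    classical
    have hle : dR q m C r ≤ finrank Fqm ↥(spanEmb Fqm S) :=
      Nat.sInf_le ⟨spanEmb Fqm S, spanEmb_closed q m Fq Fqm hq hm S, by omega, rfl⟩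
    refine hle.trans ?_
    refine le_trans ?_ hS
    unfold spanEmb
    rw [← Finset.coe_image]
    exact (finrank_span_finset_le_card _).trans Finset.card_image_le
  obtain ⟨r, rfl⟩ := Nat.exists_eq_add_of_le' hr1
  have ht1 : t - 1 = m * u / (k + u) := by simp [ht]
  rw [ht1] at h1
  rw [Nat.add_sub_cancel, ht] at hd
  zify at hd h1
  push_cast
  have : ((dR q m C (r + 1) : ℤ) - (m : ℤ) * ((r : ℤ) + 1 - 1) - 1) ≤ (m * u / (k + u) : ℤ) := by
    linarith
  calc _ ≤ ((k : ℤ) + u) * (m * u / (k + u) : ℤ) := by gcongr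
    _ ≤ _ := by linarith

end RankPaper
end
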